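/- arXiv:1810.02839 — 2 statements merged into one kernel-verified Lean document; each statement's English description precedes it below -/
import Mathlib

section
/- There exists a constant c > 0 such that for every integer n ≥ 2, every set S of n points in the plane in convex position, and any two trees T, T' ∈ 𝒯(S), the tree T can be transformed into T' by a sequence of at most c·log n simultaneous edge slides. -/
open scoped Classical

noncomputable section

/-- Points in the plane. -/
abbrev Pt : Type := ℝ × ℝ

/-- The closed straight-line segment spanned by an (unordered) edge. -/
def segOf (e : Sym2 Pt) : Set Pt :=
  Sym2.lift ⟨fun p q => segment ℝ p q, fun p q => segment_symm ℝ p q⟩ e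

/-- The set of endpoints of an edge. -/
def epts (e : Sym2 Pt) : Set Pt := {p | p ∈ e}

/-- Two edges intersect in at most common endpoints (they do not cross). -/
def NoCrossPair (e f : Sym2 Pt) : Prop := segOf e ∩ segOf f ⊆ epts e ∩ epts f

/-- A set of edges is noncrossing: any two distinct edges meet in at most a common endpoint. -/
def NoCross (E : Finset (Sym2 Pt)) : Prop := ∀ e ∈ E, ∀ f ∈ E, e ≠ f → NoCrossPair e f

/-- `E` is the edge set of a noncrossing straight-line spanning tree on the point set `S`:
all edges are nondegenerate with endpoints in `S`, pairwise noncrossing, there are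
`|S| - 1` of them, and they connect all of `S`. -/
def IsPST (S : Finset Pt) (E : Finset (Sym2 Pt)) : Prop :=
  (∀ e ∈ E, ¬ e.IsDiag ∧ ∀ p ∈ e, p ∈ S) ∧
  NoCross E ∧ E.card + 1 = S.card ∧
  ∀ p ∈ S, ∀ q ∈ S, Relation.ReflTransGen (fun a b => s(a, b) ∈ E) p q

/-- `S` is in general position: no three of its points are collinear. -/
def GenPos (S : Finset Pt) : Prop :=
  ∀ p ∈ S, ∀ q ∈ S, ∀ r ∈ S, p ≠ q → p ≠ r → q ≠ r → ¬ Collinear ℝ ({p, q, r} : Set Pt)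

/-- `S` is in convex position: every point of `S` is a vertex of the convex hull of `S`. -/
def ConvexPos (S : Finset Pt) : Prop :=
  ∀ p ∈ S, p ∉ convexHull ℝ ((S : Set Pt) \ {p})

/-- The open interior of the triangle with vertices `p`, `q`, `r`. -/
def triInt (p q r : Pt) : Set Pt := interior (convexHull ℝ ({p, q, r} : Set Pt))

/-- `y` can be reached from `x` by a sequence of at most `m` `step`-operations. -/
def ReachesIn {α : Type*} (step : α → α → Prop) (m : ℕ) (x y : α) : Prop :=
  ∃ k ≤ m, ∃ f : ℕ → α, f 0 = x ∧ f k = y ∧ ∀ i < k, step (f i) (f (i + 1))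

/-- A simultaneous rotation from `E₁` to `E₂`: a bijection `π` between the removed and the
inserted edges such that each `e` shares an endpoint with `π e` and `π e` crosses no edge
of `E₁`. -/
def SimRotation (S : Finset Pt) (E₁ E₂ : Finset (Sym2 Pt)) : Prop :=
  IsPST S E₁ ∧ IsPST S E₂ ∧ ∃ π : Sym2 Pt → Sym2 Pt,
    Set.BijOn π ↑(E₁ \ E₂) ↑(E₂ \ E₁) ∧
    ∀ e ∈ E₁ \ E₂, (∃ p, p ∈ e ∧ p ∈ π e) ∧ ∀ f ∈ E₁, NoCrossPair (π e) f

/-- An empty-triangle rotation replaces an edge `pq` by an adjacent edge `pr` such that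
no edge of either tree meets the interior of the triangle `pqr`. -/
def EmptyTriRot (S : Finset Pt) (E₁ E₂ : Finset (Sym2 Pt)) : Prop :=
  IsPST S E₁ ∧ IsPST S E₂ ∧ ∃ p q r : Pt,
    E₁ \ E₂ = {s(p, q)} ∧ E₂ \ E₁ = {s(p, r)} ∧
    ∀ g ∈ E₁ ∪ E₂, Disjoint (segOf g) (triInt p q r)

/-- A simultaneous empty-triangle rotation. -/
def SimEmptyTriRot (S : Finset Pt) (E₁ E₂ : Finset (Sym2 Pt)) : Prop :=
  IsPST S E₁ ∧ IsPST S E₂ ∧ ∃ π : Sym2 Pt → Sym2 Pt,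
    Set.BijOn π ↑(E₁ \ E₂) ↑(E₂ \ E₁) ∧
    ∀ e ∈ E₁ \ E₂, ∃ p q r : Pt, e = s(p, q) ∧ π e = s(p, r) ∧
      ∀ g ∈ E₁ ∪ E₂, Disjoint (segOf g) (triInt p q r)

/-- An edge slide replaces `pq` by `pr`, where `qr` is an edge of both trees and no edge of
either tree meets the interior of the triangle `pqr`. -/
def EdgeSlide (S : Finset Pt) (E₁ E₂ : Finset (Sym2 Pt)) : Prop :=
  IsPST S E₁ ∧ IsPST S E₂ ∧ ∃ p q r : Pt,
    E₁ \ E₂ = {s(p, q)} ∧ E₂ \ E₁ = {s(p, r)} ∧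
    s(q, r) ∈ E₁ ∧ s(q, r) ∈ E₂ ∧
    ∀ g ∈ E₁ ∪ E₂, Disjoint (segOf g) (triInt p q r)

/-- A simultaneous edge slide. -/
def SimEdgeSlide (S : Finset Pt) (E₁ E₂ : Finset (Sym2 Pt)) : Prop :=
  IsPST S E₁ ∧ IsPST S E₂ ∧ ∃ π : Sym2 Pt → Sym2 Pt,
    Set.BijOn π ↑(E₁ \ E₂) ↑(E₂ \ E₁) ∧
    ∀ e ∈ E₁ \ E₂, ∃ p q r : Pt, e = s(p, q) ∧ π e = s(p, r) ∧
      s(q, r) ∈ E₁ ∧ s(q, r) ∈ E₂ ∧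
      ∀ g ∈ E₁ ∪ E₂, Disjoint (segOf g) (triInt p q r)

/-- `e` is an edge of the convex hull of `S`: it joins two distinct points of `S` and its
segment lies on the boundary of the convex hull of `S`. -/
def IsHullEdge (S : Finset Pt) (e : Sym2 Pt) : Prop :=
  ∃ u v : Pt, e = s(u, v) ∧ u ∈ S ∧ v ∈ S ∧ u ≠ v ∧
    segment ℝ u v ⊆ frontier (convexHull ℝ (S : Set Pt))

/-- The spanning star centered at `v`. -/
def starAt (S : Finset Pt) (v : Pt) : Finset (Sym2 Pt) := (S.erase v).image (fun w => s(v, w))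

/-- An edge-labeled tree: an edge set together with a labeling function. -/
abbrev LTree := Finset (Sym2 Pt) × (Sym2 Pt → ℕ)

/-- `T` is an edge-labeled noncrossing straight-line spanning tree on `S`: its edge set is in
`𝒯(S)` and its labeling is a bijection from the edges onto `{1, …, |S| - 1}`
(normalized to `0` on non-edges). -/
def IsLabeledPST (S : Finset Pt) (T : LTree) : Prop :=
  IsPST S T.1 ∧ Set.BijOn T.2 ↑T.1 (Set.Icc 1 (S.card - 1)) ∧ ∀ e, e ∉ T.1 → T.2 e = 0

/-- A simultaneous exchange on edge-labeled trees: an arbitrary bijection between removed and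
inserted edges transferring labels, all common edges keeping their labels. -/
def LabSimExchange (S : Finset Pt) (T₁ T₂ : LTree) : Prop :=
  IsLabeledPST S T₁ ∧ IsLabeledPST S T₂ ∧ ∃ π : Sym2 Pt → Sym2 Pt,
    Set.BijOn π ↑(T₁.1 \ T₂.1) ↑(T₂.1 \ T₁.1) ∧
    (∀ e ∈ T₁.1 \ T₂.1, T₂.2 (π e) = T₁.2 e) ∧
    ∀ e ∈ T₁.1 ∩ T₂.1, T₂.2 e = T₁.2 e

/-- A rotation on edge-labeled trees: the removed and inserted edges share an endpoint and do
not cross, the label of the removed edge is transferred, and all other labels are kept. -/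
def LabRotation (S : Finset Pt) (T₁ T₂ : LTree) : Prop :=
  IsLabeledPST S T₁ ∧ IsLabeledPST S T₂ ∧ ∃ e₁ e₂ : Sym2 Pt,
    T₁.1 \ T₂.1 = {e₁} ∧ T₂.1 \ T₁.1 = {e₂} ∧
    (∃ p, p ∈ e₁ ∧ p ∈ e₂) ∧ NoCrossPair e₁ e₂ ∧
    T₂.2 e₂ = T₁.2 e₁ ∧ ∀ e ∈ T₁.1 ∩ T₂.1, T₂.2 e = T₁.2 e

/-- An edge slide on edge-labeled trees, transferring the label of the slid edge. -/
def LabEdgeSlide (S : Finset Pt) (T₁ T₂ : LTree) : Prop :=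
  IsLabeledPST S T₁ ∧ IsLabeledPST S T₂ ∧ ∃ p q r : Pt,
    T₁.1 \ T₂.1 = {s(p, q)} ∧ T₂.1 \ T₁.1 = {s(p, r)} ∧
    s(q, r) ∈ T₁.1 ∧ s(q, r) ∈ T₂.1 ∧
    (∀ g ∈ T₁.1 ∪ T₂.1, Disjoint (segOf g) (triInt p q r)) ∧
    T₂.2 (s(p, r)) = T₁.2 (s(p, q)) ∧ ∀ e ∈ T₁.1 ∩ T₂.1, T₂.2 e = T₁.2 e

/-!
Both trees are brought to the same star by rounds of boundedly many simultaneous slides, each of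
which disposes of a constant fraction of the points. On points in convex position crossing is
decided by the cyclic order alone, and a slide along three pairwise noncrossing edges has an empty
triangle, so everything up to the last step is about chords of a polygon.

A tree has many vertices of degree at most two, and one simultaneous slide turns an independent set
of degree-two vertices into leaves, so a constant fraction of the points may be assumed to be
leaves. Deleting an edge of a noncrossing tree separates at most two pairs of successive points, so
the tree distances from the points to their successors sum to `O(n)`, and a constant fraction of
the leaves is at bounded distance from its successor. All these leaves walk along their tree paths
simultaneously, without crossings, until each hangs on its successor by a boundary edge. Such edges
cross nothing, so the remaining points can be treated recursively while the parked leaves stay; once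
the remaining points form a star, one more slide attaches the parked leaves to its centre.
-/

namespace ReachesIn

variable {β γ : Type*} {step : β → β → Prop} {m n : ℕ} {x y z : β}

theorem refl (m : ℕ) (x : β) : ReachesIn step m x x :=
  ⟨0, m.zero_le, fun _ => x, rfl, rfl, by simp⟩

theorem cons (hxy : step x y) : ReachesIn step m y z → ReachesIn step (m + 1) x z := by
  rintro ⟨k, hk, f, rfl, rfl, hf⟩
  refine ⟨k + 1, by lia, fun | 0 => x | i + 1 => f i, rfl, rfl, ?_⟩
  rintro (_ | i) hi
  · exact hxy
  · exact hf i (by lia)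

theorem single (hxy : step x y) : ReachesIn step 1 x y :=
  cons hxy (refl 0 y)

theorem mono (hmn : m ≤ n) : ReachesIn step m x y → ReachesIn step n x y :=
  fun ⟨k, hk, path⟩ => ⟨k, hk.trans hmn, path⟩

theorem of_forall_lt {f : ℕ → β} (hf : ∀ i < m, step (f i) (f (i + 1))) :
    ReachesIn step m (f 0) (f m) :=
  ⟨m, le_rfl, f, rfl, rfl, hf⟩

theorem trans (hxy : ReachesIn step m x y) (hyz : ReachesIn step n y z) :
    ReachesIn step (m + n) x z := by
  obtain ⟨k, hk, f, rfl, rfl, hf⟩ := hxy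
  suffices ReachesIn step (k + n) (f 0) z from this.mono (by lia)
  clear hk
  induction k generalizing f with
  | zero => simpa using hyz
  | succ k ih =>
    rw [Nat.add_right_comm]
    exact cons (hf 0 k.succ_pos) (ih (fun i => f (i + 1)) (fun i hi => hf (i + 1) (by lia)) hyz)

theorem symm (hstep : ∀ x y, step x y → step y x) :
    ReachesIn step m x y → ReachesIn step m y x := by
  rintro ⟨k, hk, f, rfl, rfl, hf⟩
  refine ⟨k, hk, fun i => f (k - i), by simp, by simp, fun i hi => hstep _ _ ?_⟩
  have hsucc : k - i = k - (i + 1) + 1 := by lia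
  simpa only [hsucc] using hf (k - (i + 1)) (by lia)

theorem map {step' : γ → γ → Prop} (g : β → γ) (hg : ∀ x y, step x y → step' (g x) (g y)) :
    ReachesIn step m x y → ReachesIn step' m (g x) (g y) := by
  rintro ⟨k, hk, f, rfl, rfl, hf⟩
  exact ⟨k, hk, g ∘ f, rfl, rfl, fun i hi => hg _ _ (hf i hi)⟩

end ReachesIn

section Interlace

variable {α ι : Type*} [LinearOrder ι] {k : α → ι} {a b c d x y : α}

/-- The pairs `a b` and `c d` interlace in the order of the key `k`. Read cyclically, `k` lists the
vertices of a convex polygon, and the relation says that two of its chords cross. -/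
def Interlace (k : α → ι) (a b c d : α) : Prop :=
  (k c ∈ Set.uIoo (k a) (k b) ∧ k d ∉ Set.uIcc (k a) (k b)) ∨
    (k d ∈ Set.uIoo (k a) (k b) ∧ k c ∉ Set.uIcc (k a) (k b))

theorem interlace_iff :
    Interlace k a b c d ↔
      ((k a < k c ∧ k c < k b ∨ k b < k c ∧ k c < k a) ∧
        (k d < k a ∧ k d < k b ∨ k a < k d ∧ k b < k d)) ∨
      ((k a < k d ∧ k d < k b ∨ k b < k d ∧ k d < k a) ∧
        (k c < k a ∧ k c < k b ∨ k a < k c ∧ k b < k c)) := by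
  simp only [Interlace, Set.uIoo, Set.uIcc, Set.mem_Ioo, Set.mem_Icc, not_and_or, not_le,
    inf_lt_iff, lt_inf_iff, sup_lt_iff, lt_sup_iff]
  grind

theorem Interlace.symm (h : Interlace k a b c d) : Interlace k c d a b := by
  rw [interlace_iff] at *; grind

theorem interlace_swap_left : Interlace k a b c d ↔ Interlace k b a c d := by
  simp only [Interlace, Set.uIoo_comm, Set.uIcc_comm]

theorem interlace_swap_right : Interlace k a b c d ↔ Interlace k a b d c := or_comm

theorem Interlace.key_ne (h : Interlace k a b c d) :
    k a ≠ k c ∧ k a ≠ k d ∧ k b ≠ k c ∧ k b ≠ k d := by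
  rw [interlace_iff] at h; grind

theorem Interlace.split (h : Interlace k x y a c) (hx : k b ≠ k x) (hy : k b ≠ k y) :
    Interlace k x y a b ∨ Interlace k x y b c := by
  rw [interlace_iff] at *; rw [interlace_iff]; grind

/-- Crossing of edges drawn as chords of a convex polygon with cyclic order `k`. -/
def Crosses (k : α → ι) : Sym2 α → Sym2 α → Prop :=
  Sym2.lift₂ ⟨Interlace k, fun _ _ _ _ =>
    ⟨propext interlace_swap_left, propext interlace_swap_right⟩⟩

theorem Crosses.symm {e f : Sym2 α} (h : Crosses k e f) : Crosses k f e := by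
  induction e; induction f
  exact Interlace.symm h

/-- No two edges of `E`, drawn as chords of a convex polygon with cyclic order `k`, cross. -/
def Noncrossing (k : α → ι) (E : Set (Sym2 α)) : Prop :=
  ∀ e ∈ E, ∀ f ∈ E, ¬ Crosses k e f

theorem Noncrossing.mono {E F : Set (Sym2 α)} (hF : Noncrossing k F) (hEF : E ⊆ F) :
    Noncrossing k E :=
  fun e he f hf => hF e (hEF he) f (hEF hf)

theorem Noncrossing.union {E F : Set (Sym2 α)} (hE : Noncrossing k E) (hF : Noncrossing k F)
    (hEF : ∀ e ∈ E, ∀ f ∈ F, ¬ Crosses k e f) : Noncrossing k (E ∪ F) := by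
  rintro e (he | he) f (hf | hf)
  · exact hE e he f hf
  · exact hEF e he f hf
  · exact fun h => hEF f hf e he h.symm
  · exact hF e he f hf

end Interlace

section Graph

variable {α : Type*}

theorem reachable_map_of_adj {V W : Type*} {G : SimpleGraph V} {H : SimpleGraph W} (ρ : V → W)
    (hρ : ∀ x y, G.Adj x y → H.Reachable (ρ x) (ρ y)) {x y : V} (hxy : G.Reachable x y) :
    H.Reachable (ρ x) (ρ y) := by
  obtain ⟨p⟩ := hxy
  induction p with
  | nil => rfl
  | cons hadj _ ih => exact (hρ _ _ hadj).trans ih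

theorem walk_support_subset {G : SimpleGraph α} {S : Set α} (hG : ∀ x y, G.Adj x y → y ∈ S)
    {a b : α} (p : G.Walk a b) (ha : a ∈ S) : ∀ x ∈ p.support, x ∈ S := by
  induction p with
  | nil => simpa using ha
  | cons hadj p ih =>
    intro x hx
    rcases List.mem_cons.1 hx with rfl | hx
    · exact ha
    · exact ih (hG _ _ hadj) x hx

/-- The graph whose edges are the nondegenerate members of `E`. -/
abbrev graphOf (E : Finset (Sym2 α)) : SimpleGraph α :=
  SimpleGraph.fromEdgeSet (E : Set (Sym2 α))

theorem graphOf_adj {E : Finset (Sym2 α)} {a b : α} :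
    (graphOf E).Adj a b ↔ s(a, b) ∈ E ∧ a ≠ b := by
  simp

theorem mem_of_mem_edges {E : Finset (Sym2 α)} {a b : α} {p : (graphOf E).Walk a b} {e : Sym2 α}
    (he : e ∈ p.edges) : e ∈ E := by
  have := p.edges_subset_edgeSet he
  rw [SimpleGraph.edgeSet_fromEdgeSet] at this
  exact this.1

/-- `E` is the edge set of a spanning tree on the vertex set `S`. -/
structure IsSpanningTree (S : Finset α) (E : Finset (Sym2 α)) : Prop where
  not_isDiag : ∀ e ∈ E, ¬ e.IsDiag
  mem_of_mem : ∀ e ∈ E, ∀ v ∈ e, v ∈ S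
  card_add_one : E.card + 1 = S.card
  reachable : ∀ a ∈ S, ∀ b ∈ S, (graphOf E).Reachable a b

theorem card_le_card_add_one_of_reachable {S : Finset α} {E : Finset (Sym2 α)} (hS : S.Nonempty)
    (hES : ∀ e ∈ E, ∀ v ∈ e, v ∈ S) (hreach : ∀ a ∈ S, ∀ b ∈ S, (graphOf E).Reachable a b) :
    S.card ≤ E.card + 1 := by
  have hadj : ∀ x y, (graphOf E).Adj x y → y ∈ (S : Set α) := fun x y hxy =>
    hES _ (graphOf_adj.1 hxy).1 y (Sym2.mem_mk_right x y)
  have hconn : ((graphOf E).induce (S : Set α)).Connected := by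
    have : Nonempty (S : Set α) := hS.to_subtype
    refine ⟨fun a b => ?_⟩
    obtain ⟨p⟩ := hreach a a.2 b b.2
    exact ⟨p.induce S (walk_support_subset hadj p a.2)⟩
  have hedges :
      Nat.card ((graphOf E).induce (S : Set α)).edgeSet ≤ Nat.card (E : Set (Sym2 α)) := by
    have hmem (e : ((graphOf E).induce (S : Set α)).edgeSet) : e.1.map Subtype.val ∈ E := by
      obtain ⟨⟨a, b⟩, he⟩ := e
      exact (graphOf_adj.1 he).1
    exact Nat.card_le_card_of_injective (fun e => (⟨_, hmem e⟩ : (E : Set (Sym2 α))))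
      fun e e' h => Subtype.ext (Sym2.map.injective Subtype.val_injective (congrArg Subtype.val h))
  calc S.card = Nat.card (S : Set α) := by simp
    _ ≤ Nat.card ((graphOf E).induce (S : Set α)).edgeSet + 1 :=
        hconn.card_vert_le_card_edgeSet_add_one
    _ ≤ E.card + 1 := by simpa using hedges

namespace IsSpanningTree

variable {S : Finset α} {E : Finset (Sym2 α)} {a b : α}

theorem nonempty (hE : IsSpanningTree S E) : S.Nonempty :=
  Finset.card_pos.1 (by have := hE.card_add_one; lia)

theorem ne (hE : IsSpanningTree S E) (hab : s(a, b) ∈ E) : a ≠ b :=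
  hE.not_isDiag _ hab

theorem left_mem (hE : IsSpanningTree S E) (hab : s(a, b) ∈ E) : a ∈ S :=
  hE.mem_of_mem _ hab a (Sym2.mem_mk_left a b)

theorem right_mem (hE : IsSpanningTree S E) (hab : s(a, b) ∈ E) : b ∈ S :=
  hE.mem_of_mem _ hab b (Sym2.mem_mk_right a b)

theorem adj_iff (hE : IsSpanningTree S E) : (graphOf E).Adj a b ↔ s(a, b) ∈ E :=
  graphOf_adj.trans (and_iff_left_of_imp hE.ne)

theorem support_subset (hE : IsSpanningTree S E) (p : (graphOf E).Walk a b) (ha : a ∈ S) :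
    ∀ x ∈ p.support, x ∈ S :=
  walk_support_subset (S := S) (fun _ _ h => hE.right_mem (hE.adj_iff.1 h)) p ha

theorem not_reachable_erase (hE : IsSpanningTree S E) (hab : s(a, b) ∈ E) :
    ¬ (graphOf (E.erase s(a, b))).Reachable a b := by
  intro hreach
  have hstep : ∀ x y, (graphOf E).Adj x y → (graphOf (E.erase s(a, b))).Reachable x y := by
    intro x y hxy
    by_cases hne : s(x, y) = s(a, b)
    · rcases Sym2.eq_iff.1 hne with ⟨rfl, rfl⟩ | ⟨rfl, rfl⟩
      exacts [hreach, hreach.symm]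
    · exact (graphOf_adj.2 ⟨Finset.mem_erase.2 ⟨hne, hE.adj_iff.1 hxy⟩, hxy.ne⟩).reachable
  have hcard := card_le_card_add_one_of_reachable hE.nonempty
    (fun e he => hE.mem_of_mem e (Finset.mem_of_mem_erase he))
    (fun x hx y hy => reachable_map_of_adj id hstep (hE.reachable x hx y hy))
  have := Finset.card_erase_add_one hab
  have := hE.card_add_one
  lia

theorem isAcyclic (hE : IsSpanningTree S E) : (graphOf E).IsAcyclic := by
  rw [SimpleGraph.isAcyclic_iff_forall_adj_isBridge]
  intro a b hab
  rw [SimpleGraph.isBridge_iff, SimpleGraph.deleteEdges_fromEdgeSet]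
  simpa only [graphOf, Finset.coe_erase] using hE.not_reachable_erase (hE.adj_iff.1 hab)

theorem of_reachable_of_card_le {F : Finset (Sym2 α)} (hE : IsSpanningTree S E)
    (hF : ∀ e ∈ F, ¬ e.IsDiag ∧ ∀ v ∈ e, v ∈ S)
    (hreach : ∀ x y, s(x, y) ∈ E → (graphOf F).Reachable x y) (hcard : F.card ≤ E.card) :
    IsSpanningTree S F := by
  have hreachF : ∀ x ∈ S, ∀ y ∈ S, (graphOf F).Reachable x y := fun x hx y hy =>
    reachable_map_of_adj id (fun a b hab => hreach a b (hE.adj_iff.1 hab)) (hE.reachable x hx y hy)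
  have hle := card_le_card_add_one_of_reachable hE.nonempty (fun e he => (hF e he).2) hreachF
  have := hE.card_add_one
  exact ⟨fun e he => (hF e he).1, fun e he => (hF e he).2, by lia, hreachF⟩

end IsSpanningTree

end Graph

section Slide

variable {α ι : Type*} [LinearOrder ι] {k : α → ι} {S : Finset α}

/-- A simultaneous edge slide from `E₁` to `E₂`, both drawn as chords of a convex polygon with
cyclic order `k`. The bijection `π` pairs a removed edge `p q` with the inserted edge `p r`, where
`q r` is kept. For noncrossing edges the triangle `p q r` is then automatically empty. -/
def IsSimSlide (k : α → ι) (S : Finset α) (E₁ E₂ : Finset (Sym2 α)) : Prop :=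
  IsSpanningTree S E₁ ∧ IsSpanningTree S E₂ ∧ Noncrossing k (E₁ ∪ E₂ : Set (Sym2 α)) ∧
    ∃ π : Sym2 α → Sym2 α, Set.BijOn π (E₁ \ E₂ : Set (Sym2 α)) (E₂ \ E₁ : Set (Sym2 α)) ∧
      ∀ e ∈ E₁, e ∉ E₂ → ∃ p q r, e = s(p, q) ∧ π e = s(p, r) ∧ s(q, r) ∈ E₁ ∧ s(q, r) ∈ E₂

theorem IsSimSlide.symm {E₁ E₂ : Finset (Sym2 α)} (h : IsSimSlide k S E₁ E₂) :
    IsSimSlide k S E₂ E₁ := by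
  obtain ⟨hE₁, hE₂, hnc, π, hπ, hslide⟩ := h
  have : Nonempty (Sym2 α) := hE₁.nonempty.to_type.map fun a => s(a, a)
  refine ⟨hE₂, hE₁, by rwa [Set.union_comm], Function.invFunOn π (E₁ \ E₂ : Set (Sym2 α)),
    (Set.bijOn_comm hπ.invOn_invFunOn).2 hπ, fun f hf hfE₁ => ?_⟩
  obtain ⟨e, he, rfl⟩ := hπ.surjOn ⟨hf, hfE₁⟩
  obtain ⟨p, q, r, hpq, hpr, hqr₁, hqr₂⟩ := hslide e he.1 he.2
  refine ⟨p, r, q, hpr, ?_, by rwa [Sym2.eq_swap], by rwa [Sym2.eq_swap]⟩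
  rw [hπ.injOn.leftInvOn_invFunOn he, hpq]

variable {T : Finset (Sym2 α)} {M : Finset α} {f g : α → Sym2 α}

theorem IsSpanningTree.exchange (hE : IsSpanningTree S (T ∪ M.image f))
    (hf : Set.InjOn f M) (hfT : Disjoint T (M.image f))
    (hfg : ∀ i ∈ M, f i = g i ∨ ∃ p q r, f i = s(p, q) ∧ g i = s(p, r) ∧ p ≠ r ∧ s(q, r) ∈ T) :
    IsSpanningTree S (T ∪ M.image g) := by
  have hfM {i} (hi : i ∈ M) : f i ∈ T ∪ M.image f :=
    Finset.mem_union_right _ (Finset.mem_image_of_mem f hi)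
  have hgM {i} (hi : i ∈ M) : g i ∈ T ∪ M.image g :=
    Finset.mem_union_right _ (Finset.mem_image_of_mem g hi)
  have hmem : ∀ e ∈ T ∪ M.image g, ¬ e.IsDiag ∧ ∀ v ∈ e, v ∈ S := by
    intro e he
    rcases Finset.mem_union.1 he with he | he
    · have he' : e ∈ T ∪ M.image f := Finset.mem_union_left _ he
      exact ⟨hE.not_isDiag e he', hE.mem_of_mem e he'⟩
    obtain ⟨i, hi, rfl⟩ := Finset.mem_image.1 he
    obtain heq | ⟨p, q, r, hpq, hpr, hne, hqr⟩ := hfg i hi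
    · exact heq ▸ ⟨hE.not_isDiag _ (hfM hi), hE.mem_of_mem _ (hfM hi)⟩
    · rw [hpr]
      refine ⟨hne, Sym2.ball.2 ⟨hE.left_mem (hpq ▸ hfM hi), hE.right_mem (a := q) ?_⟩⟩
      exact Finset.mem_union_left _ hqr
  have hadj {x y} (hxy : s(x, y) ∈ T ∪ M.image g) : (graphOf (T ∪ M.image g)).Adj x y :=
    graphOf_adj.2 ⟨hxy, (hmem _ hxy).1⟩
  refine hE.of_reachable_of_card_le hmem (fun x y hxy => ?_) ?_
  · rcases Finset.mem_union.1 hxy with he | he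
    · exact (hadj (Finset.mem_union_left _ he)).reachable
    obtain ⟨i, hi, hi_eq⟩ := Finset.mem_image.1 he
    obtain heq | ⟨p, q, r, hpq, hpr, -, hqr⟩ := hfg i hi
    · exact (hadj (hi_eq ▸ heq ▸ hgM hi)).reachable
    · have hpq_reach : (graphOf (T ∪ M.image g)).Reachable p q :=
        (hadj (hpr ▸ hgM hi)).reachable.trans
          (hadj (Finset.mem_union_left _ hqr)).symm.reachable
      rcases Sym2.eq_iff.1 (hi_eq.symm.trans hpq) with ⟨rfl, rfl⟩ | ⟨rfl, rfl⟩
      exacts [hpq_reach, hpq_reach.symm]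
  · calc (T ∪ M.image g).card ≤ T.card + M.card :=
          (Finset.card_union_le _ _).trans (by gcongr; exact Finset.card_image_le)
      _ = (T ∪ M.image f).card := by
          rw [Finset.card_union_of_disjoint hfT, Finset.card_image_of_injOn hf]

theorem injOn_and_disjoint_of_card_union_image {γ : Type*} [DecidableEq γ] {T : Finset γ}
    {f g : α → γ} (hf : Set.InjOn f M) (hfT : Disjoint T (M.image f))
    (hcard : (T ∪ M.image g).card = (T ∪ M.image f).card) :
    Set.InjOn g M ∧ Disjoint T (M.image g) := by
  rw [Finset.card_union_of_disjoint hfT, Finset.card_image_of_injOn hf] at hcard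
  have hunion := Finset.card_union_add_card_inter T (M.image g)
  have himage := Finset.card_image_le (s := M) (f := g)
  refine ⟨Finset.card_image_iff.1 (by lia), Finset.disjoint_iff_inter_eq_empty.2 ?_⟩
  exact Finset.card_eq_zero.1 (by lia)

theorem coe_union_image_sdiff {γ : Type*} [DecidableEq γ] {T : Finset γ} {f g : α → γ}
    (hfT : Disjoint T (M.image f)) (hfg : ∀ i ∈ M, ∀ j ∈ M, f i = g j → i = j) :
    (↑(T ∪ M.image f) \ ↑(T ∪ M.image g) : Set γ) = f '' {i | i ∈ M ∧ f i ≠ g i} := by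
  have hfT' : ∀ i ∈ M, f i ∉ T := fun i hi hT =>
    Finset.disjoint_left.1 hfT hT (Finset.mem_image_of_mem f hi)
  ext e
  simp only [Finset.coe_union, Finset.coe_image, Set.mem_sdiff, Set.mem_union, Set.mem_image,
    Finset.mem_coe, Set.mem_ofPred_eq]
  grind

theorem IsSimSlide.of_family (hE : IsSpanningTree S (T ∪ M.image f))
    (hf : Set.InjOn f M) (hfT : Disjoint T (M.image f))
    (hfg : ∀ i ∈ M, f i = g i ∨ ∃ p q r, f i = s(p, q) ∧ g i = s(p, r) ∧ p ≠ r ∧ s(q, r) ∈ T)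
    (hinj : ∀ i ∈ M, ∀ j ∈ M, f i = g j → i = j)
    (hnc : Noncrossing k ((T ∪ M.image f : Finset _) ∪ (T ∪ M.image g : Finset _) : Set _)) :
    IsSimSlide k S (T ∪ M.image f) (T ∪ M.image g) := by
  have hE' : IsSpanningTree S (T ∪ M.image g) := hE.exchange hf hfT hfg
  obtain ⟨hg, hgT⟩ := injOn_and_disjoint_of_card_union_image hf hfT
    (Nat.add_right_cancel (hE'.card_add_one.trans hE.card_add_one.symm))
  have hmoved : {i | i ∈ M ∧ f i ≠ g i} ⊆ (M : Set α) := fun _ hi => hi.1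
  have : Nonempty α := hE.nonempty.to_type
  have hinv {i} (hi : i ∈ M) : Function.invFunOn f M (f i) = i := hf.leftInvOn_invFunOn hi
  refine ⟨hE, hE', hnc, g ∘ Function.invFunOn f M, ?_, fun e he he' => ?_⟩
  · rw [coe_union_image_sdiff hfT hinj, coe_union_image_sdiff hgT fun i hi j hj h =>
      (hinj j hj i hi h.symm).symm]
    simp only [ne_comm (a := g _)]
    refine (hg.mono hmoved).bijOn_image.comp ((Set.bijOn_comm ⟨?_, ?_⟩).2
      (hf.mono hmoved).bijOn_image)
    · exact fun i hi => hinv hi.1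
    · rintro _ ⟨i, hi, rfl⟩
      rw [hinv hi.1]
  · obtain ⟨i, ⟨hi, hne⟩, rfl⟩ := (coe_union_image_sdiff hfT hinj).le ⟨he, he'⟩
    obtain ⟨p, q, r, hpq, hpr, -, hqr⟩ := (hfg i hi).resolve_left hne
    exact ⟨p, q, r, hpq, by rw [Function.comp_apply, hinv hi, hpr],
      Finset.mem_union_left _ hqr, Finset.mem_union_left _ hqr⟩

end Slide

section Pendants

variable {α ι : Type*} {S A : Finset α} {T T' E : Finset (Sym2 α)} {w w' : α → α}

/-- The edges joining each vertex `v` of `A` to its anchor `w v`. -/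
def pendants (A : Finset α) (w : α → α) : Finset (Sym2 α) :=
  A.image fun v => s(v, w v)

theorem mem_pendants {e : Sym2 α} : e ∈ pendants A w ↔ ∃ v ∈ A, s(v, w v) = e :=
  Finset.mem_image

theorem mk_mem_pendants {v : α} (hv : v ∈ A) : s(v, w v) ∈ pendants A w :=
  Finset.mem_image_of_mem _ hv

theorem eq_of_pendant_eq {u v a b : α} (hv : v ∈ A) (hb : b ∉ A) (h : s(v, a) = s(u, b)) :
    v = u := by
  rcases Sym2.eq_iff.1 h with h | h
  · exact h.1
  · exact absurd (h.1 ▸ hv) hb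

theorem injOn_pendant (hw : ∀ v ∈ A, w v ∉ A) : Set.InjOn (fun v => s(v, w v)) A :=
  fun _ hu v hv h => eq_of_pendant_eq hu (hw v hv) h

theorem card_pendants (hw : ∀ v ∈ A, w v ∉ A) : (pendants A w).card = A.card :=
  Finset.card_image_of_injOn (injOn_pendant hw)

theorem IsSpanningTree.disjoint_pendants (hT : IsSpanningTree S T) (hSA : Disjoint S A) :
    Disjoint T (pendants A w) := by
  rw [Finset.disjoint_right]
  intro e he heT
  obtain ⟨v, hv, rfl⟩ := mem_pendants.1 he
  exact Finset.disjoint_left.1 hSA (hT.left_mem heT) hv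

theorem IsSpanningTree.union_pendants (hT : IsSpanningTree S T) (hSA : Disjoint S A)
    (hw : ∀ v ∈ A, w v ∈ S) : IsSpanningTree (S ∪ A) (T ∪ pendants A w) := by
  have hwA : ∀ v ∈ A, w v ∉ A := fun v hv => Finset.disjoint_left.1 hSA (hw v hv)
  have hne : ∀ v ∈ A, v ≠ w v := fun v hv h => hwA v hv (h ▸ hv)
  refine ⟨?_, ?_, ?_, ?_⟩
  · intro e he
    rcases Finset.mem_union.1 he with he | he
    · exact hT.not_isDiag e he
    · obtain ⟨v, hv, rfl⟩ := mem_pendants.1 he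
      exact hne v hv
  · intro e he
    rcases Finset.mem_union.1 he with he | he
    · exact fun v hv => Finset.mem_union_left _ (hT.mem_of_mem e he v hv)
    · obtain ⟨v, hv, rfl⟩ := mem_pendants.1 he
      exact Sym2.ball.2 ⟨Finset.mem_union_right _ hv, Finset.mem_union_left _ (hw v hv)⟩
  · rw [Finset.card_union_of_disjoint (hT.disjoint_pendants hSA),
      Finset.card_union_of_disjoint hSA, card_pendants hwA, ← hT.card_add_one]
    lia
  · have hanchor : ∀ x ∈ S ∪ A, ∃ y ∈ S, (graphOf (T ∪ pendants A w)).Reachable x y := by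
      intro x hx
      rcases Finset.mem_union.1 hx with hx | hx
      · exact ⟨x, hx, .refl x⟩
      · exact ⟨w x, hw x hx, (graphOf_adj.2
          ⟨Finset.mem_union_right _ (mk_mem_pendants hx), hne x hx⟩).reachable⟩
    intro x hx y hy
    obtain ⟨x', hx', hxx'⟩ := hanchor x hx
    obtain ⟨y', hy', hyy'⟩ := hanchor y hy
    have hmono : graphOf T ≤ graphOf (T ∪ pendants A w) :=
      SimpleGraph.fromEdgeSet_mono (by simp)
    exact hxx'.trans (((hT.reachable x' hx' y' hy').mono hmono).trans hyy'.symm)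

/-- Every vertex `v` of `A` is a leaf of `E` with neighbour `w v`. -/
def AreLeaves (E : Finset (Sym2 α)) (A : Finset α) (w : α → α) : Prop :=
  ∀ v ∈ A, ∀ x, s(v, x) ∈ E ↔ x = w v

namespace AreLeaves

theorem pendants_subset (hA : AreLeaves E A w) : pendants A w ⊆ E := by
  intro e he
  obtain ⟨v, hv, rfl⟩ := mem_pendants.1 he
  exact (hA v hv _).2 rfl

theorem mem_pendants_iff (hA : AreLeaves E A w) {a b : α} (hab : s(a, b) ∈ E) :
    s(a, b) ∈ pendants A w ↔ a ∈ A ∨ b ∈ A := by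
  have hleft {x y} (hxy : s(x, y) ∈ E) (hx : x ∈ A) : s(x, y) ∈ pendants A w :=
    (hA x hx y).1 hxy ▸ mk_mem_pendants hx
  refine ⟨fun h => ?_, Or.rec (hleft hab) fun hb => ?_⟩
  · obtain ⟨v, hv, hv_eq⟩ := mem_pendants.1 h
    rcases Sym2.eq_iff.1 hv_eq with ⟨rfl, -⟩ | ⟨rfl, -⟩
    exacts [.inl hv, .inr hv]
  · rw [Sym2.eq_swap] at hab ⊢
    exact hleft hab hb

end AreLeaves

theorem IsSpanningTree.sdiff_pendants (hE : IsSpanningTree S E) (hAS : A ⊆ S)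
    (hA : AreLeaves E A w) (hwA : ∀ v ∈ A, w v ∉ A) :
    IsSpanningTree (S \ A) (E \ pendants A w) := by
  have hkept {a b} : s(a, b) ∈ E \ pendants A w ↔ s(a, b) ∈ E ∧ a ∉ A ∧ b ∉ A := by
    rw [Finset.mem_sdiff, and_congr_right_iff]
    exact fun hab => (hA.mem_pendants_iff hab).not.trans not_or
  refine ⟨fun e he => hE.not_isDiag e (Finset.mem_sdiff.1 he).1, ?_, ?_, ?_⟩
  · rintro ⟨a, b⟩ hab
    obtain ⟨hab, ha, hb⟩ := hkept.1 hab
    exact Sym2.ball.2 ⟨Finset.mem_sdiff.2 ⟨hE.left_mem hab, ha⟩,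
      Finset.mem_sdiff.2 ⟨hE.right_mem hab, hb⟩⟩
  · rw [Finset.card_sdiff_of_subset hA.pendants_subset, Finset.card_sdiff_of_subset hAS,
      card_pendants hwA]
    have := card_pendants hwA ▸ Finset.card_le_card hA.pendants_subset
    have := hE.card_add_one
    lia
  · set ρ : α → α := fun v => if v ∈ A then w v else v with hρ
    have hρ_adj : ∀ x y, (graphOf E).Adj x y →
        (graphOf (E \ pendants A w)).Reachable (ρ x) (ρ y) := by
      intro x y hxy
      have hmem : s(x, y) ∈ E := hE.adj_iff.1 hxy
      by_cases hx : x ∈ A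
      · obtain rfl := (hA x hx y).1 hmem
        simp only [hρ, if_pos hx, if_neg (hwA x hx), SimpleGraph.Reachable.rfl]
      by_cases hy : y ∈ A
      · obtain rfl := (hA y hy x).1 (Sym2.eq_swap ▸ hmem)
        simp only [hρ, if_pos hy, if_neg hx, SimpleGraph.Reachable.rfl]
      · simp only [hρ, if_neg hx, if_neg hy]
        exact (graphOf_adj.2 ⟨hkept.2 ⟨hmem, hx, hy⟩, hxy.ne⟩).reachable
    intro x hx y hy
    obtain ⟨hx, hxA⟩ := Finset.mem_sdiff.1 hx
    obtain ⟨hy, hyA⟩ := Finset.mem_sdiff.1 hy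
    simpa only [hρ, if_neg hxA, if_neg hyA] using
      reachable_map_of_adj ρ hρ_adj (hE.reachable x hx y hy)

variable [LinearOrder ι] {k : α → ι}

/-- No chord of the polygon on `S` separates `v` from `w`. -/
def IsBoundaryPair (k : α → ι) (S : Finset α) (v w : α) : Prop :=
  ∀ x ∈ S, ∀ y ∈ S, ¬ Interlace k x y v w

theorem IsBoundaryPair.not_crosses {v w : α} (h : IsBoundaryPair k S v w) {e : Sym2 α}
    (he : ∀ x ∈ e, x ∈ S) : ¬ Crosses k e s(v, w) := by
  induction e with
  | h x y => exact h x (he x (Sym2.mem_mk_left x y)) y (he y (Sym2.mem_mk_right x y))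

theorem Noncrossing.union_boundary_pendants {F : Set (Sym2 α)} (hF : Noncrossing k F)
    (hFS : ∀ e ∈ F, ∀ x ∈ e, x ∈ S) (hA : ∀ v ∈ A, v ∈ S ∧ w v ∈ S)
    (hw : ∀ v ∈ A, IsBoundaryPair k S v (w v)) : Noncrossing k (F ∪ pendants A w) := by
  have hpendant : ∀ e, (∀ x ∈ e, x ∈ S) → ∀ f ∈ pendants A w, ¬ Crosses k e f := by
    intro e he f hf
    obtain ⟨v, hv, rfl⟩ := mem_pendants.1 hf
    exact (hw v hv).not_crosses he
  refine hF.union (fun e he => hpendant e ?_) fun e he => hpendant e (hFS e he)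
  obtain ⟨v, hv, rfl⟩ := mem_pendants.1 he
  exact Sym2.ball.2 (hA v hv)

theorem IsSimSlide.union_pendants (h : IsSimSlide k S T T') (hSA : Disjoint S A)
    (hw : ∀ v ∈ A, w v ∈ S) (hbd : ∀ v ∈ A, IsBoundaryPair k (S ∪ A) v (w v)) :
    IsSimSlide k (S ∪ A) (T ∪ pendants A w) (T' ∪ pendants A w) := by
  obtain ⟨hT, hT', hnc, π, hπ, hslide⟩ := h
  have hsdiff {T T' : Finset (Sym2 α)} (hT : IsSpanningTree S T) :
      (↑(T ∪ pendants A w) \ ↑(T' ∪ pendants A w) : Set (Sym2 α)) = ↑T \ ↑T' := by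
    have hdisj := Finset.disjoint_left.1 (hT.disjoint_pendants (w := w) hSA)
    ext e
    simp only [Finset.coe_union, Set.mem_sdiff, Set.mem_union, Finset.mem_coe]
    grind
  refine ⟨hT.union_pendants hSA hw, hT'.union_pendants hSA hw, ?_, π, ?_, ?_⟩
  · simp only [Finset.coe_union, ← Set.union_union_distrib_right]
    refine hnc.union_boundary_pendants (S := S ∪ A) ?_ (fun v hv =>
      ⟨Finset.mem_union_right _ hv, Finset.mem_union_left _ (hw v hv)⟩) hbd
    rintro e (he | he) x hx
    · exact Finset.mem_union_left _ (hT.mem_of_mem e he x hx)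
    · exact Finset.mem_union_left _ (hT'.mem_of_mem e he x hx)
  · rwa [hsdiff hT, hsdiff hT']
  · intro e he he'
    obtain ⟨heT, heT'⟩ := (hsdiff hT).le ⟨he, he'⟩
    obtain ⟨p, q, r, hpq, hpr, hqr, hqr'⟩ := hslide e heT heT'
    exact ⟨p, q, r, hpq, hpr, Finset.mem_union_left _ hqr, Finset.mem_union_left _ hqr'⟩

theorem IsSimSlide.move_pendants (hT : IsSpanningTree S T) (hSA : Disjoint S A)
    (hw : ∀ v ∈ A, w v ∈ S) (hw' : ∀ v ∈ A, w' v ∈ S)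
    (hmove : ∀ v ∈ A, w v = w' v ∨ s(w v, w' v) ∈ T)
    (hnc : Noncrossing k (T ∪ (pendants A w ∪ pendants A w') : Set (Sym2 α))) :
    IsSimSlide k (S ∪ A) (T ∪ pendants A w) (T ∪ pendants A w') := by
  have hSA' {v} (hv : v ∈ S) : v ∉ A := Finset.disjoint_left.1 hSA hv
  refine IsSimSlide.of_family (hT.union_pendants hSA hw)
    (injOn_pendant fun v hv => hSA' (hw v hv)) (hT.disjoint_pendants hSA) ?_
    (fun u hu v hv h => eq_of_pendant_eq hu (hSA' (hw' v hv)) h) ?_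
  · intro v hv
    refine (hmove v hv).imp (fun h => by rw [h]) fun h =>
      ⟨v, w v, w' v, rfl, rfl, fun hvw => hSA' (hw' v hv) (hvw ▸ hv), h⟩
  · refine hnc.mono ?_
    simp only [Finset.coe_union, pendants]
    grind

end Pendants

section WalkCrossing

variable {α ι : Type*} [LinearOrder ι] {k : α → ι} {G : SimpleGraph α} {a b c d v h x y : α}

theorem Interlace.exists_mem_support (p : G.Walk a b)
    (hp : ∀ e ∈ p.edges, ¬ Crosses k s(x, y) e) (hab : Interlace k x y a b) :
    ∃ z ∈ p.support, k z = k x ∨ k z = k y := by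
  induction p with
  | nil => exact ⟨_, SimpleGraph.Walk.start_mem_support _, by rw [interlace_iff] at hab; grind⟩
  | @cons a c b hadj p ih =>
    simp only [SimpleGraph.Walk.edges_cons, SimpleGraph.Walk.support_cons, List.mem_cons,
      forall_eq_or_imp, exists_eq_or_imp] at hp ⊢
    by_cases hc : k c = k x ∨ k c = k y
    · exact .inr ⟨c, p.start_mem_support, hc⟩
    · rw [not_or] at hc
      exact .inr (ih hp.2 ((hab.split hc.1 hc.2).resolve_left hp.1))

theorem Interlace.exists_key_eq (p : G.Walk a b) (q : G.Walk c d)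
    (hpq : ∀ e ∈ p.edges, ∀ f ∈ q.edges, ¬ Crosses k e f) (h : Interlace k a b c d) :
    ∃ z ∈ p.support, ∃ z' ∈ q.support, k z = k z' := by
  by_cases hp : ∃ e ∈ p.edges, Crosses k s(c, d) e
  · obtain ⟨⟨u, v⟩, he, hcross⟩ := hp
    obtain ⟨z, hz, hzu | hzv⟩ := hcross.symm.exists_mem_support q (hpq _ he)
    · exact ⟨u, p.fst_mem_support_of_mem_edges he, z, hz, hzu.symm⟩
    · exact ⟨v, p.snd_mem_support_of_mem_edges he, z, hz, hzv.symm⟩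
  · push Not at hp
    obtain ⟨z, hz, hzc | hzd⟩ := h.symm.exists_mem_support p hp
    · exact ⟨z, hz, c, q.start_mem_support, hzc⟩
    · exact ⟨z, hz, d, q.end_mem_support, hzd⟩

theorem Interlace.exists_getVert (p : G.Walk v h) (hp : ∀ e ∈ p.edges, ¬ Crosses k s(x, y) e)
    (hvh : ¬ Interlace k x y v h) {t : ℕ} (ht : Interlace k x y v (p.getVert t)) :
    ∃ i j, i < t ∧ t < j ∧ j ≤ p.length ∧ (k (p.getVert i) = k x ∨ k (p.getVert i) = k y) ∧
      (k (p.getVert j) = k x ∨ k (p.getVert j) = k y) := by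
  have hbefore := ht.exists_mem_support (p.take t) fun e he =>
    hp e ((p.isSubwalk_take t).edges_subset he)
  have hafter : ∃ z ∈ (p.drop t).support, k z = k x ∨ k z = k y := by
    by_cases hh : k h = k x ∨ k h = k y
    · exact ⟨h, SimpleGraph.Walk.end_mem_support _, hh⟩
    · rw [not_or] at hh
      exact ((interlace_swap_right.1 ht).split hh.1 hh.2).elim
        (fun hth => hth.exists_mem_support _ fun e he =>
          hp e ((p.isSubwalk_drop t).edges_subset he))
        fun hhv => absurd (interlace_swap_right.1 hhv) hvh
  have ht_ne := ht.key_ne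
  simp only [SimpleGraph.Walk.mem_support_iff_exists_getVert, SimpleGraph.Walk.take_getVert,
    SimpleGraph.Walk.drop_getVert, SimpleGraph.Walk.take_length,
    SimpleGraph.Walk.drop_length] at hbefore hafter
  obtain ⟨_, ⟨i, rfl, -⟩, hik⟩ := hbefore
  obtain ⟨_, ⟨j, rfl, hj⟩, hjk⟩ := hafter
  have hi_lt : min t i < t := lt_of_le_of_ne (min_le_left t i) fun h => by
    rw [h] at hik; exact hik.elim ht_ne.2.1.symm ht_ne.2.2.2.symm
  have hj_pos : j ≠ 0 := fun h => by
    rw [h, add_zero] at hjk; exact hjk.elim ht_ne.2.1.symm ht_ne.2.2.2.symm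
  exact ⟨min t i, t + j, hi_lt, by lia, by lia, hik, hjk⟩

end WalkCrossing

section PathChord

variable {α ι : Type*} [LinearOrder ι] {k : α → ι} {S : Finset α} {E : Finset (Sym2 α)}
  {v h v' h' x y : α} {i j t : ℕ}

theorem eq_succ_of_adj_getVert {G : SimpleGraph α} (hG : G.IsAcyclic) {p : G.Walk v h}
    (hp : p.IsPath) (hij : i < j) (hj : j ≤ p.length)
    (hadj : G.Adj (p.getVert i) (p.getVert j)) : j = i + 1 := by
  have hmem : p.getVert j ∈ (p.drop i).support :=
    SimpleGraph.Walk.mem_support_iff_exists_getVert.2 ⟨j - i, by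
      rw [SimpleGraph.Walk.drop_getVert, Nat.add_sub_cancel' hij.le], by
      rw [SimpleGraph.Walk.drop_length]; lia⟩
  have hsnd := hG.eq_snd_of_adj_start (hp.drop i) hadj hmem
  rw [SimpleGraph.Walk.snd, SimpleGraph.Walk.drop_getVert] at hsnd
  exact hp.getVert_injOn hj (Set.mem_ofPred.2 (by lia)) hsnd

theorem IsSpanningTree.getVert_mem (hE : IsSpanningTree S E) (hv : v ∈ S)
    (p : (graphOf E).Walk v h) (i : ℕ) : p.getVert i ∈ S :=
  hE.support_subset p hv _ (p.getVert_mem_support i)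

theorem IsSpanningTree.exists_getVert (hE : IsSpanningTree S E) (hk : Set.InjOn k S)
    (hv : v ∈ S) (hx : x ∈ S) (hy : y ∈ S) (hxy : ∀ e ∈ E, ¬ Crosses k s(x, y) e)
    (hvh : IsBoundaryPair k S v h) {p : (graphOf E).Walk v h} (hp : p.IsPath)
    (ht : Interlace k x y v (p.getVert t)) :
    ∃ i j, i < t ∧ t < j ∧ j ≤ p.length ∧ s(p.getVert i, p.getVert j) = s(x, y) := by
  obtain ⟨i, j, hit, htj, hj, hik, hjk⟩ := ht.exists_getVert p (fun e he =>
    hxy e (mem_of_mem_edges he)) (hvh x hx y hy)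
  have hmem := hE.getVert_mem hv p
  have hne : p.getVert i ≠ p.getVert j := fun h => by
    have := hp.getVert_injOn (Set.mem_ofPred.2 (by lia)) hj h
    lia
  refine ⟨i, j, hit, htj, hj, Sym2.eq_iff.2 ?_⟩
  have hi := hik.imp (hk (hmem i) hx) (hk (hmem i) hy)
  have hj := hjk.imp (hk (hmem j) hx) (hk (hmem j) hy)
  grind

theorem IsSpanningTree.not_interlace_getVert (hE : IsSpanningTree S E) (hk : Set.InjOn k S)
    (hnc : Noncrossing k (E : Set (Sym2 α))) (hv : v ∈ S) (hvh : IsBoundaryPair k S v h)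
    {p : (graphOf E).Walk v h} (hp : p.IsPath) (hxy : s(x, y) ∈ E) :
    ¬ Interlace k x y v (p.getVert t) := by
  intro ht
  obtain ⟨i, j, hit, htj, hj, hij⟩ := hE.exists_getVert hk hv (hE.left_mem hxy) (hE.right_mem hxy)
    (hnc _ hxy) hvh hp ht
  have := eq_succ_of_adj_getVert hE.isAcyclic hp (hit.trans htj) hj (hE.adj_iff.2 (hij ▸ hxy))
  lia

theorem IsSpanningTree.not_interlace_getVert_getVert (hE : IsSpanningTree S E)
    (hk : Set.InjOn k S) (hnc : Noncrossing k (E : Set (Sym2 α))) (hv : v ∈ S) (hv' : v' ∈ S)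
    (hvh : IsBoundaryPair k S v h) (hvh' : IsBoundaryPair k S v' h')
    {p : (graphOf E).Walk v h} {q : (graphOf E).Walk v' h'} (hp : p.IsPath) (hq : q.IsPath)
    (hvq : v ∈ q.support → v = v') : ¬ Interlace k v (p.getVert i) v' (q.getVert j) := by
  intro hij
  obtain ⟨a, b, -, -, -, hab⟩ := hE.exists_getVert hk hv' hv (hE.getVert_mem hv p i)
    (fun e he hcross => by
      induction e with
      | h x y => exact hE.not_interlace_getVert hk hnc hv hvh hp he hcross.symm) hvh' hq hij
  have hvq' : v ∈ q.support := by
    rcases Sym2.eq_iff.1 hab with h | h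
    exacts [h.1 ▸ q.getVert_mem_support a, h.2 ▸ q.getVert_mem_support b]
  exact hij.key_ne.1 (congrArg k (hvq hvq'))

end PathChord

section Successor

variable {α ι : Type*} [LinearOrder ι] {k : α → ι} {S : Finset α} {u v w : α}

/-- `w` is the point of `S` whose key comes next after that of `v`. -/
def IsSuccIn (k : α → ι) (S : Finset α) (v w : α) : Prop :=
  w ∈ S ∧ k v < k w ∧ ∀ u ∈ S, k v < k u → k w ≤ k u

theorem exists_isSuccIn (hu : u ∈ S) (hvu : k v < k u) : ∃ w, IsSuccIn k S v w := by
  obtain ⟨w, hw, hmin⟩ := (S.filter fun u => k v < k u).exists_min_image k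
    ⟨u, Finset.mem_filter.2 ⟨hu, hvu⟩⟩
  rw [Finset.mem_filter] at hw
  exact ⟨w, hw.1, hw.2, fun u hu hvu => hmin u (Finset.mem_filter.2 ⟨hu, hvu⟩)⟩

theorem IsSuccIn.isBoundaryPair (h : IsSuccIn k S v w) : IsBoundaryPair k S v w := by
  intro x hx y hy hxy
  have hx := h.2.2 x hx
  have hy := h.2.2 y hy
  have := h.2.1
  rw [interlace_iff] at hxy
  grind

theorem IsSuccIn.left_unique (hk : Set.InjOn k S) (hu : u ∈ S) (hv : v ∈ S)
    (huw : IsSuccIn k S u w) (hvw : IsSuccIn k S v w) : u = v :=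
  hk hu hv (le_antisymm (not_lt.1 fun h => (huw.2.1.trans_le (hvw.2.2 u hu h)).false)
    (not_lt.1 fun h => (hvw.2.1.trans_le (huw.2.2 v hv h)).false))

end Successor

section Separation

variable {α ι : Type*} [LinearOrder ι] {k : α → ι} {S : Finset α} {E : Finset (Sym2 α)}
  {a b c d v w x y z : α} {e : Sym2 α}

theorem reachable_of_alternating (hk : Set.InjOn k S) (hES : ∀ e ∈ E, ∀ x ∈ e, x ∈ S)
    (hnc : Noncrossing k (E : Set (Sym2 α))) (ha : a ∈ S) (hb : b ∈ S) (hab : k a < k b)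
    (hbc : k b < k c) (hcd : k c < k d) (hac : (graphOf E).Reachable a c)
    (hbd : (graphOf E).Reachable b d) : (graphOf E).Reachable a b := by
  obtain ⟨p⟩ := hac
  obtain ⟨q⟩ := hbd
  have hinterlace : Interlace k a c b d := by rw [interlace_iff]; grind
  obtain ⟨z, hz, z', hz', hzz'⟩ := hinterlace.exists_key_eq p q fun e he f hf =>
    hnc e (mem_of_mem_edges he) f (mem_of_mem_edges hf)
  have hadj : ∀ x y, (graphOf E).Adj x y → y ∈ (S : Set α) := fun x y hxy =>
    hES _ (graphOf_adj.1 hxy).1 y (Sym2.mem_mk_right x y)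
  obtain rfl := hk (walk_support_subset hadj p ha z hz) (walk_support_subset hadj q hb z' hz') hzz'
  exact (p.takeUntil z hz).reachable.trans (q.takeUntil z hz').reachable.symm

theorem reachable_erase_or (p : (graphOf E).Walk x y) :
    (graphOf (E.erase s(a, b))).Reachable x y ∨ (graphOf (E.erase s(a, b))).Reachable x a ∨
      (graphOf (E.erase s(a, b))).Reachable x b := by
  induction p with
  | nil => exact .inl .rfl
  | @cons x x' y hadj _ ih =>
    by_cases hxx' : s(x, x') = s(a, b)
    · rcases Sym2.eq_iff.1 hxx' with ⟨rfl, -⟩ | ⟨rfl, -⟩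
      exacts [.inr (.inl .rfl), .inr (.inr .rfl)]
    · have hadj' : (graphOf (E.erase s(a, b))).Adj x x' :=
        graphOf_adj.2 ⟨Finset.mem_erase.2 ⟨hxx', (graphOf_adj.1 hadj).1⟩, hadj.ne⟩
      exact ih.imp hadj'.reachable.trans (Or.imp hadj'.reachable.trans hadj'.reachable.trans)

theorem IsSpanningTree.reachable_erase (hE : IsSpanningTree S E) (hx : x ∈ S) (hy : y ∈ S)
    (hz : z ∈ S) (hxy : ¬ (graphOf (E.erase e)).Reachable x y)
    (hyz : ¬ (graphOf (E.erase e)).Reachable y z) : (graphOf (E.erase e)).Reachable x z := by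
  induction e with | h a b =>
  have hside {u u'} (hu : u ∈ S) (hu' : u' ∈ S)
      (h : ¬ (graphOf (E.erase s(a, b))).Reachable u u') :
      (graphOf (E.erase s(a, b))).Reachable u a ∨ (graphOf (E.erase s(a, b))).Reachable u b :=
    (hE.reachable u hu u' hu').elim fun p => (reachable_erase_or p).resolve_left h
  rcases hside hx hy hxy with hxa | hxb <;> rcases hside hy hz hyz with hya | hyb <;>
    rcases hside hz hy fun h => hyz h.symm with hza | hzb
  · exact hxa.trans hza.symm
  · exact absurd (hxa.trans hya.symm) hxy
  · exact hxa.trans hza.symm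
  · exact absurd (hyb.trans hzb.symm) hyz
  · exact absurd (hya.trans hza.symm) hyz
  · exact hxb.trans hzb.symm
  · exact absurd (hxb.trans hyb.symm) hxy
  · exact hxb.trans hzb.symm

theorem IsSpanningTree.dist_le_card_separating (hE : IsSpanningTree S E) (hv : v ∈ S)
    (hw : w ∈ S) : (graphOf E).dist v w ≤
      (E.filter fun e => ¬ (graphOf (E.erase e)).Reachable v w).card := by
  obtain ⟨p, hp, hlength⟩ := (hE.reachable v hv w hw).exists_path_of_dist
  rw [← hlength, ← p.length_edges, ← List.toFinset_card_of_nodup hp.isTrail.edges_nodup]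
  refine Finset.card_le_card fun e he => ?_
  rw [List.mem_toFinset] at he
  refine Finset.mem_filter.2 ⟨mem_of_mem_edges he, fun hreach => ?_⟩
  obtain ⟨q, hq⟩ := hreach.exists_isPath
  have hmono : graphOf (E.erase e) ≤ graphOf E :=
    SimpleGraph.fromEdgeSet_mono (Finset.coe_subset.2 (E.erase_subset e))
  have hpq : p = q.mapLe hmono := congrArg Subtype.val <|
    (hE.isAcyclic.subsingleton_path v w).elim ⟨p, hp⟩ ⟨_, hq.mapLe hmono⟩
  rw [hpq, SimpleGraph.Walk.edges_mapLe_eq_edges] at he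
  exact Finset.notMem_erase e E (mem_of_mem_edges he)

theorem exists_key_lt_lt (hk : Set.InjOn k S) (hS : 2 < S.card) :
    ∃ x ∈ S, ∃ y ∈ S, ∃ z ∈ S, k x < k y ∧ k y < k z := by
  obtain ⟨x, hx, y, hy, z, hz, hxy, hxz, hyz⟩ := Finset.two_lt_card.1 hS
  have hxy := (hk.ne hx hy hxy).lt_or_gt
  have hxz := (hk.ne hx hz hxz).lt_or_gt
  have hyz := (hk.ne hy hz hyz).lt_or_gt
  grind

theorem IsSpanningTree.not_reachable_erase_of_isSuccIn (hE : IsSpanningTree S E)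
    (hk : Set.InjOn k S) (hnc : Noncrossing k (E : Set (Sym2 α))) {v' w' : α} (hv : v ∈ S)
    (hv' : v' ∈ S) (hvv' : k v < k v') (hsucc : IsSuccIn k S v w) (hsucc' : IsSuccIn k S v' w')
    (hvw : ¬ (graphOf (E.erase e)).Reachable v w)
    (hvw' : ¬ (graphOf (E.erase e)).Reachable v' w') :
    ¬ (graphOf (E.erase e)).Reachable v v' := by
  intro hreach
  have hwv' : ¬ (graphOf (E.erase e)).Reachable w v' := fun h => hvw (hreach.trans h.symm)
  have hww' : (graphOf (E.erase e)).Reachable w w' :=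
    hE.reachable_erase hsucc.1 hv' hsucc'.1 hwv' hvw'
  have hlt : k w < k v' := (hsucc.2.2 v' hv' hvv').lt_of_ne fun h => by
    rw [hk hsucc.1 hv' h] at hwv'
    exact hwv' .rfl
  exact hvw (reachable_of_alternating hk
    (fun e he => hE.mem_of_mem e (Finset.mem_of_mem_erase he))
    (hnc.mono (Finset.coe_subset.2 (E.erase_subset e))) hv hsucc.1 hsucc.2.1 hlt hsucc'.2.1
    hreach hww')

theorem IsSpanningTree.card_separated_le_two (hE : IsSpanningTree S E) (hk : Set.InjOn k S)
    (hnc : Noncrossing k (E : Set (Sym2 α))) {B : Finset α} (hB : B ⊆ S) {nx : α → α}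
    (hnx : ∀ v ∈ B, IsSuccIn k S v (nx v)) (e : Sym2 α) :
    (B.filter fun v => ¬ (graphOf (E.erase e)).Reachable v (nx v)).card ≤ 2 := by
  by_contra! hcard
  obtain ⟨x, hx, y, hy, z, hz, hxy, hyz⟩ := exists_key_lt_lt
    (hk.mono (Finset.coe_subset.2 ((B.filter_subset _).trans hB))) hcard
  rw [Finset.mem_filter] at hx hy hz
  obtain ⟨⟨hx, hx_sep⟩, ⟨hy, hy_sep⟩, ⟨hz, hz_sep⟩⟩ := hx, hy, hz
  have hsep {u v} (hu : u ∈ B) (hv : v ∈ B) (huv : k u < k v) :=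
    hE.not_reachable_erase_of_isSuccIn (e := e) hk hnc (hB hu) (hB hv) huv (hnx u hu) (hnx v hv)
  exact hsep hx hz (hxy.trans hyz) hx_sep hz_sep <| hE.reachable_erase (hB hx) (hB hy) (hB hz)
    (hsep hx hy hxy hx_sep hy_sep) (hsep hy hz hyz hy_sep hz_sep)

theorem IsSpanningTree.sum_dist_le (hE : IsSpanningTree S E) (hk : Set.InjOn k S)
    (hnc : Noncrossing k (E : Set (Sym2 α))) {B : Finset α} (hB : B ⊆ S) {nx : α → α}
    (hnx : ∀ v ∈ B, IsSuccIn k S v (nx v)) :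
    ∑ v ∈ B, (graphOf E).dist v (nx v) ≤ 2 * E.card := by
  calc ∑ v ∈ B, (graphOf E).dist v (nx v)
    _ ≤ ∑ v ∈ B, (E.filter fun e => ¬ (graphOf (E.erase e)).Reachable v (nx v)).card :=
        Finset.sum_le_sum fun v hv => hE.dist_le_card_separating (hB hv) (hnx v hv).1
    _ = ∑ e ∈ E, (B.filter fun v => ¬ (graphOf (E.erase e)).Reachable v (nx v)).card :=
        Finset.sum_card_bipartiteAbove_eq_sum_card_bipartiteBelow
          fun v e => ¬ (graphOf (E.erase e)).Reachable v (nx v)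
    _ ≤ 2 * E.card := by
        rw [mul_comm, ← smul_eq_mul]
        exact Finset.sum_le_card_nsmul _ _ _ fun e _ =>
          hE.card_separated_le_two hk hnc hB hnx e

end Separation

section Contraction

variable {α ι : Type*} {S M : Finset α} {E : Finset (Sym2 α)} {w w' : α → α}

theorem exists_pairwise_subset_card_le {r : α → α → Prop} [DecidableRel r]
    (hr : ∀ u v, r u v → r v u) {D : Finset α} {d : ℕ} (hD : ∀ v ∈ D, (D.filter (r v)).card ≤ d) :
    ∃ M ⊆ D, D.card ≤ (d + 1) * M.card ∧ (M : Set α).Pairwise fun u v => ¬ r u v := by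
  obtain ⟨M, hM, hmax⟩ := Finset.exists_max_image
    (D.powerset.filter fun M : Finset α => (M : Set α).Pairwise fun u v => ¬ r u v) Finset.card
    ⟨∅, by simp⟩
  simp only [Finset.mem_filter, Finset.mem_powerset] at hM hmax
  obtain ⟨hMD, hM⟩ := hM
  refine ⟨M, hMD, ?_, hM⟩
  have hcover : D ⊆ M ∪ M.biUnion fun u => D.filter (r u) := by
    intro v hv
    by_contra hvM
    simp only [Finset.mem_union, Finset.mem_biUnion, Finset.mem_filter, not_or, not_exists,
      not_and] at hvM
    have hnot : ∀ u ∈ M, ¬ r v u := fun u hu h => hvM.2 u hu hv (hr _ _ h)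
    have := hmax (insert v M) ⟨Finset.insert_subset hv hMD, by
      rw [Finset.coe_insert]
      exact hM.insert fun u hu _ => ⟨hnot u hu, fun h => hnot u hu (hr _ _ h)⟩⟩
    rw [Finset.card_insert_of_notMem hvM.1] at this
    lia
  calc D.card ≤ M.card + (M.biUnion fun u => D.filter (r u)).card :=
        (Finset.card_le_card hcover).trans (Finset.card_union_le _ _)
    _ ≤ M.card + M.card * d := by
        gcongr
        exact Finset.card_biUnion_le_card_mul _ _ _ fun v hv => hD v (hMD hv)
    _ = (d + 1) * M.card := by ring

/-- The neighbours in `S` of the vertex `v` along the edges of `E`. -/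
def neighbors (S : Finset α) (E : Finset (Sym2 α)) (v : α) : Finset α :=
  S.filter fun x => s(v, x) ∈ E

theorem sum_card_neighbors_le (S : Finset α) (E : Finset (Sym2 α)) :
    ∑ v ∈ S, (neighbors S E v).card ≤ 2 * E.card := by
  have hincident : ∀ v ∈ S, (neighbors S E v).card ≤ (E.filter (v ∈ ·)).card := by
    intro v _
    refine Finset.card_le_card_of_injOn (fun x => s(v, x)) (fun x hx => ?_)
      fun x _ y _ h => Sym2.congr_right.1 h
    exact Finset.mem_filter.2 ⟨(Finset.mem_filter.1 hx).2, Sym2.mem_mk_left v x⟩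
  have htwo : ∀ e ∈ E, (S.filter (· ∈ e)).card ≤ 2 := by
    rintro ⟨a, b⟩ -
    refine le_trans (Finset.card_le_card (t := {a, b}) fun v hv => ?_) Finset.card_le_two
    simpa using (Finset.mem_filter.1 hv).2
  calc ∑ v ∈ S, (neighbors S E v).card ≤ ∑ v ∈ S, (E.filter (v ∈ ·)).card :=
        Finset.sum_le_sum hincident
    _ = ∑ e ∈ E, (S.filter (· ∈ e)).card :=
        Finset.sum_card_bipartiteAbove_eq_sum_card_bipartiteBelow (fun v e => v ∈ e)
    _ ≤ 2 * E.card := by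
        rw [mul_comm]
        exact Finset.sum_le_card_nsmul _ _ _ htwo

namespace IsSpanningTree

theorem mem_neighbors (hE : IsSpanningTree S E) {v x : α} : x ∈ neighbors S E v ↔ s(v, x) ∈ E :=
  Finset.mem_filter.trans (and_iff_right_of_imp hE.right_mem)

theorem card_neighbors_pos (hE : IsSpanningTree S E) (hS : 1 < S.card) {v : α} (hv : v ∈ S) :
    0 < (neighbors S E v).card := by
  obtain ⟨u, hu, huv⟩ := Finset.exists_mem_ne hS v
  obtain ⟨p⟩ := hE.reachable v hv u hu
  cases p with
  | nil => exact absurd rfl huv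
  | cons hadj _ => exact Finset.card_pos.2 ⟨_, hE.mem_neighbors.2 (hE.adj_iff.1 hadj)⟩

theorem card_le_card_degree_one_add_card_degree_two (hE : IsSpanningTree S E) (hS : 1 < S.card)
    {o : α} (ho : o ∈ S) :
    S.card ≤ 2 * ((S.erase o).filter fun v => (neighbors S E v).card = 1).card +
      ((S.erase o).filter fun v => (neighbors S E v).card = 2).card := by
  have hthree : ∑ v ∈ S.erase o, 3 ≤ ∑ v ∈ S.erase o, ((neighbors S E v).card +
      2 * (if (neighbors S E v).card = 1 then 1 else 0) +
        (if (neighbors S E v).card = 2 then 1 else 0)) := by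
    refine Finset.sum_le_sum fun v hv => ?_
    have := hE.card_neighbors_pos hS (Finset.mem_of_mem_erase hv)
    split_ifs <;> lia
  rw [Finset.sum_add_distrib, Finset.sum_add_distrib, ← Finset.mul_sum, ← Finset.card_filter,
    ← Finset.card_filter, Finset.sum_const, smul_eq_mul] at hthree
  have hsum := sum_card_neighbors_le S E
  rw [← Finset.add_sum_erase _ _ ho] at hsum
  have := hE.card_neighbors_pos hS ho
  have := Finset.card_erase_add_one ho
  have := hE.card_add_one
  lia

end IsSpanningTree

variable [LinearOrder ι] {k : α → ι}

theorem IsSpanningTree.not_interlace_shortcut (hE : IsSpanningTree S E) (hk : Set.InjOn k S)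
    (hnc : Noncrossing k (E : Set (Sym2 α))) {x y v a b : α} (hxy : s(x, y) ∈ E)
    (hv : ∀ z, s(v, z) ∈ E ↔ z = a ∨ z = b) : ¬ Interlace k x y a b := by
  intro h
  obtain ⟨hxa, hxb, hya, hyb⟩ := h.key_ne
  have hva : s(v, a) ∈ E := (hv a).2 (.inl rfl)
  have hvx : v ≠ x := by
    rintro rfl
    rcases (hv y).1 hxy with rfl | rfl <;> contradiction
  have hvy : v ≠ y := by
    rintro rfl
    rcases (hv x).1 (Sym2.eq_swap ▸ hxy) with rfl | rfl <;> contradiction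
  rcases h.split (b := v) (hk.ne (hE.left_mem hva) (hE.left_mem hxy) hvx)
    (hk.ne (hE.left_mem hva) (hE.right_mem hxy) hvy) with h | h
  · exact hnc _ hxy _ hva (interlace_swap_right.1 h)
  · exact hnc _ hxy _ ((hv b).2 (.inr rfl)) h

theorem IsSpanningTree.noncrossing_union_shortcuts (hE : IsSpanningTree S E)
    (hk : Set.InjOn k S) (hnc : Noncrossing k (E : Set (Sym2 α)))
    (hM : ∀ u ∈ M, ∀ v ∈ M, s(u, v) ∉ E)
    (hnbr : ∀ v ∈ M, ∀ x, s(v, x) ∈ E ↔ x = w v ∨ x = w' v) :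
    Noncrossing k ((E : Set (Sym2 α)) ∪ M.image fun v => s(w v, w' v)) := by
  have hw : ∀ v ∈ M, s(v, w v) ∈ E := fun v hv => (hnbr v hv _).2 (.inl rfl)
  have hw' : ∀ v ∈ M, s(v, w' v) ∈ E := fun v hv => (hnbr v hv _).2 (.inr rfl)
  refine hnc.union ?_ ?_
  · rintro e he f hf
    obtain ⟨u, hu, rfl⟩ := Finset.mem_image.1 he
    obtain ⟨v, hv, rfl⟩ := Finset.mem_image.1 hf
    intro h
    have hne : ∀ x ∈ S, s(u, x) ∈ E → k v ≠ k x := by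
      intro x hx hux
      refine hk.ne (hE.left_mem (hw v hv)) hx ?_
      rintro rfl
      exact hM u hu v hv hux
    rcases Interlace.split (b := v) h (hne _ (hE.right_mem (hw u hu)) (hw u hu))
      (hne _ (hE.right_mem (hw' u hu)) (hw' u hu)) with h | h
    · exact hE.not_interlace_shortcut hk hnc (hw v hv) (hnbr u hu) (interlace_swap_left.1 h.symm)
    · exact hE.not_interlace_shortcut hk hnc (hw' v hv) (hnbr u hu) h.symm
  · rintro ⟨x, y⟩ hxy f hf
    obtain ⟨v, hv, rfl⟩ := Finset.mem_image.1 hf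
    exact hE.not_interlace_shortcut hk hnc hxy (hnbr v hv)

/-- The result of replacing, for every `v ∈ M`, the edge from `v` to `w' v` by the one from `w v`
to `w' v`. -/
def contract (E : Finset (Sym2 α)) (M : Finset α) (w w' : α → α) : Finset (Sym2 α) :=
  E \ pendants M w' ∪ M.image fun v => s(w v, w' v)

theorem mk_ne_shortcut {u v x : α} (hu : u ∈ M) (hw : w v ∉ M) (hw' : w' v ∉ M) :
    s(u, x) ≠ s(w v, w' v) := by
  intro h
  rcases Sym2.eq_iff.1 h with ⟨rfl, -⟩ | ⟨rfl, -⟩ <;> contradiction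

theorem mk_mem_sdiff_pendants_iff {v x : α} (hv : v ∈ M) (hw' : ∀ u ∈ M, w' u ∉ M) :
    s(v, x) ∈ E \ pendants M w' ↔ s(v, x) ∈ E ∧ x ≠ w' v := by
  rw [Finset.mem_sdiff, mem_pendants, and_congr_right_iff]
  refine fun _ => not_congr ⟨fun ⟨u, hu, h⟩ => ?_, fun h => ⟨v, hv, h ▸ rfl⟩⟩
  obtain rfl := eq_of_pendant_eq hv (hw' u hu) h.symm
  exact (Sym2.congr_right.1 h).symm

theorem areLeaves_contract (hw : ∀ v ∈ M, w v ∉ M) (hw' : ∀ v ∈ M, w' v ∉ M)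
    (hww' : ∀ v ∈ M, w v ≠ w' v)
    (hnbr : ∀ v ∈ M, ∀ x, s(v, x) ∈ E ↔ x = w v ∨ x = w' v) :
    AreLeaves (contract E M w w') M w := by
  intro v hv x
  have hnew : s(v, x) ∉ M.image fun u => s(w u, w' u) := fun h => by
    obtain ⟨u, hu, h⟩ := Finset.mem_image.1 h
    exact mk_ne_shortcut hv (hw u hu) (hw' u hu) h.symm
  rw [contract, Finset.mem_union, or_iff_left hnew, mk_mem_sdiff_pendants_iff hv hw', hnbr v hv]
  have := hww' v hv
  grind

theorem IsSpanningTree.isSimSlide_contract (hE : IsSpanningTree S E) (hk : Set.InjOn k S)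
    (hnc : Noncrossing k (E : Set (Sym2 α))) (hM : ∀ u ∈ M, ∀ v ∈ M, s(u, v) ∉ E)
    (hww' : ∀ v ∈ M, w v ≠ w' v)
    (hnbr : ∀ v ∈ M, ∀ x, s(v, x) ∈ E ↔ x = w v ∨ x = w' v) :
    IsSimSlide k S E (contract E M w w') := by
  have hwE : ∀ v ∈ M, s(v, w v) ∈ E := fun v hv => (hnbr v hv _).2 (.inl rfl)
  have hw'E : ∀ v ∈ M, s(v, w' v) ∈ E := fun v hv => (hnbr v hv _).2 (.inr rfl)
  have hwM : ∀ v ∈ M, w v ∉ M := fun v hv h => hM v hv _ h (hwE v hv)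
  have hw'M : ∀ v ∈ M, w' v ∉ M := fun v hv h => hM v hv _ h (hw'E v hv)
  have hE_eq : E \ pendants M w' ∪ M.image (fun v => s(v, w' v)) = E := by
    refine Finset.sdiff_union_of_subset fun e he => ?_
    obtain ⟨v, hv, rfl⟩ := Finset.mem_image.1 he
    exact hw'E v hv
  have hslide : IsSimSlide k S (E \ pendants M w' ∪ M.image (fun v => s(v, w' v)))
      (contract E M w w') := by
    refine IsSimSlide.of_family (hE_eq.symm ▸ hE) (injOn_pendant hw'M) Finset.sdiff_disjoint
      (fun v hv => .inr ⟨w' v, v, w v, Sym2.eq_swap, Sym2.eq_swap, (hww' v hv).symm,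
        (mk_mem_sdiff_pendants_iff hv hw'M).2 ⟨hwE v hv, hww' v hv⟩⟩)
      (fun u hu v hv h => absurd h (mk_ne_shortcut hu (hwM v hv) (hw'M v hv))) ?_
    refine (hE.noncrossing_union_shortcuts hk hnc hM hnbr).mono ?_
    rw [hE_eq, Finset.coe_union]
    exact Set.union_subset Set.subset_union_left
      (Set.union_subset_union_left _ (Finset.coe_subset.2 Finset.sdiff_subset))
  rwa [hE_eq] at hslide

theorem IsSpanningTree.exists_isSimSlide_areLeaves (hE : IsSpanningTree S E)
    (hk : Set.InjOn k S) (hnc : Noncrossing k (E : Set (Sym2 α))) {D : Finset α} (hDS : D ⊆ S)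
    (hD : ∀ v ∈ D, (neighbors S E v).card = 2) :
    ∃ E' M w, IsSimSlide k S E E' ∧ M ⊆ D ∧ D.card ≤ 3 * M.card ∧ AreLeaves E' M w := by
  obtain ⟨M, hMD, hcard, hM⟩ := exists_pairwise_subset_card_le (r := fun u v => s(u, v) ∈ E)
    (D := D) (d := 2) (fun u v h => Sym2.eq_swap ▸ h)
    fun v hv => (Finset.card_le_card (Finset.filter_subset_filter _ hDS)).trans (hD v hv).le
  have hM : ∀ u ∈ M, ∀ v ∈ M, s(u, v) ∉ E := fun u hu v hv h => hM hu hv (hE.ne h) h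
  choose! w w' hww' hnbr using fun v (hv : v ∈ M) => Finset.card_eq_two.1 (hD v (hMD hv))
  have hnbr : ∀ v ∈ M, ∀ x, s(v, x) ∈ E ↔ x = w v ∨ x = w' v := fun v hv x => by
    rw [← hE.mem_neighbors, hnbr v hv, Finset.mem_insert, Finset.mem_singleton]
  exact ⟨contract E M w w', M, w, hE.isSimSlide_contract hk hnc hM hww' hnbr, hMD, hcard,
    areLeaves_contract (fun v hv h => hM v hv _ h ((hnbr v hv _).2 (.inl rfl)))
      (fun v hv h => hM v hv _ h ((hnbr v hv _).2 (.inr rfl))) hww' hnbr⟩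

theorem IsSpanningTree.exists_reachesIn_one_areLeaves (hE : IsSpanningTree S E)
    (hk : Set.InjOn k S) (hnc : Noncrossing k (E : Set (Sym2 α))) (hS : 1 < S.card) {o : α}
    (ho : o ∈ S) :
    ∃ E' B w, ReachesIn (IsSimSlide k S) 1 E E' ∧ IsSpanningTree S E' ∧
      Noncrossing k (E' : Set (Sym2 α)) ∧ B ⊆ S.erase o ∧ S.card ≤ 6 * B.card ∧
        AreLeaves E' B w := by
  set D : ℕ → Finset α := fun d => (S.erase o).filter fun v => (neighbors S E v).card = d
  have hcount : S.card ≤ 2 * (D 1).card + (D 2).card :=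
    hE.card_le_card_degree_one_add_card_degree_two hS ho
  have hDo : ∀ d, D d ⊆ S.erase o := fun d => Finset.filter_subset _ _
  by_cases hleaves : S.card ≤ 6 * (D 1).card
  · choose! w hw using fun v (hv : v ∈ D 1) => Finset.card_eq_one.1 (Finset.mem_filter.1 hv).2
    refine ⟨E, D 1, w, .refl 1 E, hE, hnc, hDo 1, hleaves, fun v hv x => ?_⟩
    rw [← hE.mem_neighbors, hw v hv, Finset.mem_singleton]
  · obtain ⟨E', M, w, hslide, hMD, hcard, hM⟩ := hE.exists_isSimSlide_areLeaves hk hnc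
      ((hDo 2).trans (Finset.erase_subset o S)) fun v hv => (Finset.mem_filter.1 hv).2
    exact ⟨E', M, w, .single hslide, hslide.2.1, hslide.2.2.1.mono Set.subset_union_right,
      hMD.trans (hDo 2), by lia, hM⟩

end Contraction

section LeafWalk

variable {α ι : Type*} {S A : Finset α} {E : Finset (Sym2 α)} {w nx : α → α} {u : α → ℕ → α}
  {v h x : α} {N : ℕ}

theorem AreLeaves.eq_of_mem_support (hA : AreLeaves E A w) {p : (graphOf E).Walk v h}
    (hp : p.IsPath) (hh : h ∉ A) (hx : x ∈ A) (hxp : x ∈ p.support) : x = v := by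
  obtain ⟨i, rfl, hi⟩ := SimpleGraph.Walk.mem_support_iff_exists_getVert.1 hxp
  have hi_ne : i ≠ p.length := fun h => hh (by simpa only [h, p.getVert_length] using hx)
  have hedge {j} (hj : j < p.length) : s(p.getVert j, p.getVert (j + 1)) ∈ E :=
    (graphOf_adj.1 (p.adj_getVert_succ hj)).1
  cases i with
  | zero => exact p.getVert_zero
  | succ j =>
    have hprev := (hA _ hx _).1 (Sym2.eq_swap ▸ hedge (j := j) (by lia))
    have hnext := (hA _ hx _).1 (hedge (j := j + 1) (by lia))
    have := hp.getVert_injOn (Set.mem_ofPred.2 (by lia)) (Set.mem_ofPred.2 (by lia))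
      (hprev.trans hnext.symm)
    lia

theorem AreLeaves.getVert_succ_notMem (hA : AreLeaves E A w) {p : (graphOf E).Walk v h}
    (hp : p.IsPath) (hh : h ∉ A) (i : ℕ) : p.getVert (i + 1) ∉ A := by
  intro hi
  have hi_le : i + 1 ≤ p.length := by
    by_contra hlt
    exact hh (p.getVert_of_length_le (not_le.1 hlt).le ▸ hi)
  have hstart := hA.eq_of_mem_support hp hh hi (p.getVert_mem_support _)
  have := hp.getVert_injOn hi_le (Set.mem_ofPred.2 (Nat.zero_le _))
    (hstart.trans p.getVert_zero.symm)
  lia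

theorem AreLeaves.getVert_one (hA : AreLeaves E A w) {p : (graphOf E).Walk v h} (hv : v ∈ A)
    (hh : h ∉ A) : p.getVert 1 = w v := by
  cases p with
  | nil => contradiction
  | cons hadj q =>
    rw [SimpleGraph.Walk.getVert_cons_succ, q.getVert_zero]
    exact (hA v hv _).1 (graphOf_adj.1 hadj).1

theorem AreLeaves.anchor_notMem (hA : AreLeaves E A w) (hv : v ∈ A) (hh : h ∉ A)
    (hvh : (graphOf E).Reachable v h) : w v ∉ A := by
  obtain ⟨p, hp⟩ := hvh.exists_isPath
  rw [← hA.getVert_one (p := p) hv hh]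
  exact hA.getVert_succ_notMem hp hh 0

variable [LinearOrder ι] {k : α → ι}

theorem IsSpanningTree.noncrossing_union_path_pendants (hE : IsSpanningTree S E)
    (hk : Set.InjOn k S) (hnc : Noncrossing k (E : Set (Sym2 α))) (hAS : A ⊆ S)
    (hA : AreLeaves E A w) (hnx : ∀ v ∈ A, nx v ∉ A)
    (hbd : ∀ v ∈ A, IsBoundaryPair k S v (nx v))
    (hu : ∀ v ∈ A, ∃ p : (graphOf E).Walk v (nx v), p.IsPath ∧ u v = p.getVert) (i j : ℕ) :
    Noncrossing k ((E : Set (Sym2 α)) ∪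
      (pendants A (fun v => u v i) ∪ pendants A (fun v => u v j))) := by
  have hpendant : ∀ e ∈ (pendants A (fun v => u v i) ∪ pendants A (fun v => u v j) :
      Set (Sym2 α)), ∃ v ∈ A, ∃ t, s(v, u v t) = e := by
    rintro e (he | he) <;> obtain ⟨v, hv, rfl⟩ := mem_pendants.1 he
    exacts [⟨v, hv, i, rfl⟩, ⟨v, hv, j, rfl⟩]
  refine hnc.union ?_ ?_
  · intro e he f hf
    obtain ⟨v, hv, s, rfl⟩ := hpendant e he
    obtain ⟨v', hv', t, rfl⟩ := hpendant f hf
    obtain ⟨p, hp, hpu⟩ := hu v hv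
    obtain ⟨q, hq, hqu⟩ := hu v' hv'
    rw [hpu, hqu]
    exact hE.not_interlace_getVert_getVert hk hnc (hAS hv) (hAS hv') (hbd v hv) (hbd v' hv') hp hq
      (hA.eq_of_mem_support hq (hnx v' hv') hv)
  · rintro ⟨x, y⟩ hxy f hf
    obtain ⟨v, hv, t, rfl⟩ := hpendant f hf
    obtain ⟨p, hp, hpu⟩ := hu v hv
    rw [hpu]
    exact hE.not_interlace_getVert hk hnc (hAS hv) (hbd v hv) hp hxy

theorem IsSpanningTree.isSimSlide_path_step (hE : IsSpanningTree S E)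
    (hk : Set.InjOn k S) (hnc : Noncrossing k (E : Set (Sym2 α))) (hAS : A ⊆ S)
    (hA : AreLeaves E A w) (hwA : ∀ v ∈ A, w v ∉ A) (hnx : ∀ v ∈ A, nx v ∉ A)
    (hbd : ∀ v ∈ A, IsBoundaryPair k S v (nx v))
    (hu : ∀ v ∈ A, ∃ p : (graphOf E).Walk v (nx v), p.IsPath ∧ u v = p.getVert) (t : ℕ) :
    IsSimSlide k S (E \ pendants A w ∪ pendants A fun v => u v (t + 1))
      (E \ pendants A w ∪ pendants A fun v => u v (t + 2)) := by
  have hmem : ∀ t, ∀ v ∈ A, u v (t + 1) ∈ S \ A := by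
    intro t v hv
    obtain ⟨p, hp, hpu⟩ := hu v hv
    rw [hpu]
    exact Finset.mem_sdiff.2 ⟨hE.getVert_mem (hAS hv) p _, hA.getVert_succ_notMem hp (hnx v hv) t⟩
  have hmove : ∀ v ∈ A, u v (t + 1) = u v (t + 2) ∨
      s(u v (t + 1), u v (t + 2)) ∈ E \ pendants A w := by
    intro v hv
    have ht := (Finset.mem_sdiff.1 (hmem t v hv)).2
    have ht' := (Finset.mem_sdiff.1 (hmem (t + 1) v hv)).2
    obtain ⟨p, hp, hpu⟩ := hu v hv
    rw [hpu] at ht ht' ⊢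
    rcases lt_or_ge (t + 1) p.length with hlt | hge
    · have hedge := (graphOf_adj.1 (p.adj_getVert_succ hlt)).1
      have hnot := (hA.mem_pendants_iff hedge).not.2 (not_or.2 ⟨ht, ht'⟩)
      exact .inr (Finset.mem_sdiff.2 ⟨hedge, hnot⟩)
    · exact .inl ((p.getVert_of_length_le hge).trans (p.getVert_of_length_le (by lia)).symm)
  have hslide := IsSimSlide.move_pendants (hE.sdiff_pendants hAS hA hwA)
    Finset.sdiff_disjoint (hmem t) (hmem (t + 1)) hmove
    ((hE.noncrossing_union_path_pendants hk hnc hAS hA hnx hbd hu (t + 1) (t + 2)).mono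
      (Set.union_subset_union_left _ (Finset.coe_subset.2 Finset.sdiff_subset)))
  rwa [Finset.sdiff_union_of_subset hAS] at hslide

theorem IsSpanningTree.reachesIn_pendants (hE : IsSpanningTree S E)
    (hk : Set.InjOn k S) (hnc : Noncrossing k (E : Set (Sym2 α))) (hAS : A ⊆ S)
    (hA : AreLeaves E A w) (hnx : ∀ v ∈ A, nx v ∉ A) (hnxS : ∀ v ∈ A, nx v ∈ S)
    (hbd : ∀ v ∈ A, IsBoundaryPair k S v (nx v))
    (hdist : ∀ v ∈ A, (graphOf E).dist v (nx v) ≤ N) :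
    ReachesIn (IsSimSlide k S) N E (E \ pendants A w ∪ pendants A nx) := by
  have hpath : ∀ v ∈ A, ∃ u : ℕ → α, ∃ p : (graphOf E).Walk v (nx v),
      p.IsPath ∧ u = p.getVert ∧ p.length ≤ N := by
    intro v hv
    obtain ⟨p, hp, hlen⟩ := (hE.reachable v (hAS hv) _ (hnxS v hv)).exists_path_of_dist
    exact ⟨p.getVert, p, hp, rfl, hlen ▸ hdist v hv⟩
  choose! u hu using hpath
  have hwA : ∀ v ∈ A, w v ∉ A := fun v hv =>
    hA.anchor_notMem hv (hnx v hv) (hE.reachable v (hAS hv) _ (hnxS v hv))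
  have hstart : pendants A (fun v => u v 1) = pendants A w := Finset.image_congr fun v hv => by
    obtain ⟨p, -, hpu, -⟩ := hu v hv
    simp only [hpu, hA.getVert_one hv (hnx v hv)]
  have hend : pendants A (fun v => u v (N + 1)) = pendants A nx := Finset.image_congr fun v hv => by
    obtain ⟨p, -, hpu, hlen⟩ := hu v hv
    simp only [hpu, p.getVert_of_length_le (hlen.trans N.le_succ)]
  have hreach := ReachesIn.of_forall_lt (m := N)
    (f := fun t => E \ pendants A w ∪ pendants A fun v => u v (t + 1)) fun t _ =>
    hE.isSimSlide_path_step hk hnc hAS hA hwA hnx hbd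
      (fun v hv => (hu v hv).imp fun p hp => ⟨hp.1, hp.2.1⟩) t
  simp only [zero_add] at hreach
  rwa [hstart, hend, Finset.sdiff_union_of_subset hA.pendants_subset] at hreach

end LeafWalk

section Star

variable {α ι : Type*} {S A : Finset α} {o : α}

/-- The star on the vertex set `S` with centre `o`. -/
def starTree (S : Finset α) (o : α) : Finset (Sym2 α) :=
  pendants (S.erase o) fun _ => o

theorem isSpanningTree_starTree (ho : o ∈ S) : IsSpanningTree S (starTree S o) := by
  have hpoint : IsSpanningTree {o} ∅ := ⟨by simp, by simp, by simp, fun a ha b hb => by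
    rw [Finset.mem_singleton.1 ha, Finset.mem_singleton.1 hb]⟩
  have hstar := hpoint.union_pendants (A := S.erase o) (w := fun _ => o) (by simp) (by simp)
  rwa [Finset.empty_union, ← Finset.insert_eq, Finset.insert_erase ho] at hstar

theorem starTree_sdiff_union_pendants (hA : A ⊆ S.erase o) :
    starTree (S \ A) o ∪ pendants A (fun _ => o) = starTree S o := by
  rw [starTree, starTree, pendants, pendants, ← Finset.image_union, ← Finset.erase_sdiff_comm,
    Finset.sdiff_union_of_subset hA, pendants]

variable [LinearOrder ι] {k : α → ι}

theorem noncrossing_starTree (S : Finset α) (o : α) :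
    Noncrossing k (starTree S o : Set (Sym2 α)) := by
  intro e he f hf hcross
  obtain ⟨u, -, rfl⟩ := mem_pendants.1 he
  obtain ⟨v, -, rfl⟩ := mem_pendants.1 hf
  exact (Interlace.key_ne hcross).2.2.2 rfl

theorem isSimSlide_starTree (ho : o ∈ S) (hA : A ⊆ S.erase o) {nx : α → α}
    (hnx : ∀ v ∈ A, nx v ∈ S \ A) (hbd : ∀ v ∈ A, IsBoundaryPair k S v (nx v)) :
    IsSimSlide k S (starTree (S \ A) o ∪ pendants A nx) (starTree S o) := by
  have hAS : A ⊆ S := hA.trans (S.erase_subset o)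
  have hoA : o ∈ S \ A := Finset.mem_sdiff.2 ⟨ho, fun h => Finset.notMem_erase o S (hA h)⟩
  have hslide := IsSimSlide.move_pendants (k := k) (isSpanningTree_starTree hoA)
    Finset.sdiff_disjoint hnx (fun _ _ => hoA) (fun v hv => ?_) ?_
  · rwa [Finset.sdiff_union_of_subset hAS, starTree_sdiff_union_pendants hA] at hslide
  · exact or_iff_not_imp_left.2 fun h => mk_mem_pendants (Finset.mem_erase.2 ⟨h, hnx v hv⟩)
  · have hnc := (noncrossing_starTree (k := k) S o).union_boundary_pendants (S := S)
      (isSpanningTree_starTree ho).mem_of_mem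
      (fun v hv => ⟨hAS hv, (Finset.mem_sdiff.1 (hnx v hv)).1⟩) hbd
    rwa [← starTree_sdiff_union_pendants hA, Finset.coe_union, Set.union_assoc,
      Set.union_comm (pendants A _ : Set (Sym2 α))] at hnc

end Star

section Round

variable {α ι : Type*} [LinearOrder ι] {k : α → ι} {S B : Finset α} {E : Finset (Sym2 α)}
  {nx : α → α} {o : α}

theorem exists_subset_succ_notMem (hk : Set.InjOn k S) (hBS : B ⊆ S)
    (hnx : ∀ v ∈ B, IsSuccIn k S v (nx v)) :
    ∃ A ⊆ B, B.card ≤ 3 * A.card ∧ ∀ v ∈ A, nx v ∉ A := by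
  have htwo : ∀ v ∈ B, (B.filter fun u => nx v = u ∨ nx u = v).card ≤ 2 := by
    intro v _
    rw [Finset.filter_or]
    refine (Finset.card_union_le _ _).trans (add_le_add (Finset.card_le_one.2 ?_)
      (Finset.card_le_one.2 ?_))
    · grind
    · intro a ha b hb
      rw [Finset.mem_filter] at ha hb
      exact (hnx a ha.1).left_unique hk (hBS ha.1) (hBS hb.1) (ha.2.trans hb.2.symm ▸ hnx b hb.1)
  obtain ⟨A, hAB, hcard, hA⟩ := exists_pairwise_subset_card_le
    (r := fun u v => nx u = v ∨ nx v = u) (fun _ _ => Or.symm) htwo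
  refine ⟨A, hAB, hcard, fun v hv hv' => hA hv hv' ?_ (.inl rfl)⟩
  exact fun h => (hnx v (hAB hv)).2.1.ne (congrArg k h)

theorem IsSpanningTree.card_filter_dist_le (hE : IsSpanningTree S E) (hk : Set.InjOn k S)
    (hnc : Noncrossing k (E : Set (Sym2 α))) (hBS : B ⊆ S)
    (hnx : ∀ v ∈ B, IsSuccIn k S v (nx v)) (hcard : S.card ≤ 6 * B.card) :
    S.card ≤ 12 * (B.filter fun v => (graphOf E).dist v (nx v) ≤ 23).card := by
  have hfar : (B.filter fun v => ¬ (graphOf E).dist v (nx v) ≤ 23).card * 24 ≤ 2 * E.card :=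
    calc _ ≤ ∑ v ∈ B.filter fun v => ¬ (graphOf E).dist v (nx v) ≤ 23,
          (graphOf E).dist v (nx v) :=
          Finset.card_nsmul_le_sum _ _ _ fun v hv => not_le.1 (Finset.mem_filter.1 hv).2
      _ ≤ ∑ v ∈ B, (graphOf E).dist v (nx v) :=
          Finset.sum_le_sum_of_subset (Finset.filter_subset _ _)
      _ ≤ 2 * E.card := hE.sum_dist_le hk hnc hBS hnx
  have := Finset.card_filter_add_card_filter_not (s := B) fun v => (graphOf E).dist v (nx v) ≤ 23
  have := hE.card_add_one
  lia

theorem IsSpanningTree.exists_reachesIn_union_pendants (hE : IsSpanningTree S E)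
    (hk : Set.InjOn k S) (hnc : Noncrossing k (E : Set (Sym2 α))) (hS : 1 < S.card)
    (ho : o ∈ S) (hmax : ∀ v ∈ S, k v ≤ k o) :
    ∃ A T nx, ReachesIn (IsSimSlide k S) 24 E (T ∪ pendants A nx) ∧ IsSpanningTree (S \ A) T ∧
      Noncrossing k (T : Set (Sym2 α)) ∧ A ⊆ S.erase o ∧ S.card ≤ 36 * A.card ∧
      ∀ v ∈ A, nx v ∈ S \ A ∧ IsBoundaryPair k S v (nx v) := by
  obtain ⟨E', B, w, hreach, hE', hnc', hBo, hcard, hB⟩ :=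
    hE.exists_reachesIn_one_areLeaves hk hnc hS ho
  have hBS : B ⊆ S := hBo.trans (S.erase_subset o)
  have hsucc : ∀ v ∈ B, ∃ u, IsSuccIn k S v u := fun v hv =>
    exists_isSuccIn ho ((hmax v (hBS hv)).lt_of_ne
      (hk.ne (hBS hv) ho (Finset.ne_of_mem_erase (hBo hv))))
  choose! nx hnx using hsucc
  have hclose := hE'.card_filter_dist_le hk hnc' hBS hnx hcard
  have hcloseB := B.filter_subset fun v => (graphOf E').dist v (nx v) ≤ 23
  obtain ⟨A, hAC, hAcard, hAnx⟩ := exists_subset_succ_notMem hk (hcloseB.trans hBS)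
    fun v hv => hnx v (hcloseB hv)
  have hAB : A ⊆ B := hAC.trans hcloseB
  have hAS : A ⊆ S := hAB.trans hBS
  have hA : AreLeaves E' A w := fun v hv => hB v (hAB hv)
  have hnxS : ∀ v ∈ A, nx v ∈ S := fun v hv => (hnx v (hAB hv)).1
  have hbd : ∀ v ∈ A, IsBoundaryPair k S v (nx v) := fun v hv => (hnx v (hAB hv)).isBoundaryPair
  refine ⟨A, E' \ pendants A w, nx, hreach.trans (n := 23) ?_, hE'.sdiff_pendants hAS hA ?_,
    hnc'.mono (Finset.coe_subset.2 Finset.sdiff_subset), hAB.trans hBo, by lia,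
    fun v hv => ⟨Finset.mem_sdiff.2 ⟨hnxS v hv, hAnx v hv⟩, hbd v hv⟩⟩
  · exact hE'.reachesIn_pendants hk hnc' hAS hA hAnx hnxS hbd
      fun v hv => (Finset.mem_filter.1 (hAC hv)).2
  · exact fun v hv => hA.anchor_notMem hv (hAnx v hv) (hE'.reachable v (hAS hv) _ (hnxS v hv))

theorem add_log_le_log {a m n : ℝ} (hm : 0 < m) (hmn : m + a ≤ n) (hn : n ≤ 36 * a) :
    25 + 900 * Real.log m ≤ 900 * Real.log n := by
  have hn0 : 0 < n := by linarith
  have hlog := Real.one_sub_inv_le_log_of_pos (div_pos hn0 hm)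
  rw [Real.log_div hn0.ne' hm.ne', inv_div] at hlog
  have : m / n ≤ 35 / 36 := by
    rw [div_le_iff₀ hn0]
    linarith
  linarith

theorem IsSpanningTree.exists_reachesIn_starTree (hE : IsSpanningTree S E) (hk : Set.InjOn k S)
    (hnc : Noncrossing k (E : Set (Sym2 α))) (ho : o ∈ S) (hmax : ∀ v ∈ S, k v ≤ k o) :
    ∃ m : ℕ, m ≤ 900 * Real.log S.card ∧ ReachesIn (IsSimSlide k S) m E (starTree S o) := by
  induction S using Finset.strongInduction generalizing E with
  | H S ih =>
    rcases Nat.lt_or_ge 1 S.card with hS | hS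
    · obtain ⟨A, T, nx, hreach, hT, hTnc, hAo, hcard, hnx⟩ :=
        hE.exists_reachesIn_union_pendants hk hnc hS ho hmax
      have hAS : A ⊆ S := hAo.trans (S.erase_subset o)
      have hoA : o ∈ S \ A := Finset.mem_sdiff.2 ⟨ho, fun h => Finset.notMem_erase o S (hAo h)⟩
      have hsub : S \ A ⊂ S := Finset.sdiff_ssubset hAS (Finset.card_pos.1 (by lia))
      obtain ⟨m, hm, hstar⟩ := ih (S \ A) hsub hT (hk.mono (Finset.coe_subset.2 hsub.1)) hTnc hoA
        fun v hv => hmax v (hsub.1 hv)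
      have hunion : S \ A ∪ A = S := Finset.sdiff_union_of_subset hAS
      have hstar' : ReachesIn (IsSimSlide k S) m (T ∪ pendants A nx)
          (starTree (S \ A) o ∪ pendants A nx) :=
        hstar.map (· ∪ pendants A nx) fun X Y h => by
          have := h.union_pendants Finset.sdiff_disjoint (fun v hv => (hnx v hv).1)
            (hunion.symm ▸ fun v hv => (hnx v hv).2)
          rwa [hunion] at this
      refine ⟨24 + m + 1, ?_, (hreach.trans hstar').trans
        (.single (isSimSlide_starTree ho hAo (fun v hv => (hnx v hv).1) fun v hv => (hnx v hv).2))⟩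
      have := add_log_le_log (a := A.card) (m := (S \ A).card) (n := S.card)
        (by exact_mod_cast Finset.card_pos.2 ⟨o, hoA⟩)
        (by exact_mod_cast (Finset.card_sdiff_add_card_eq_card hAS).le) (by exact_mod_cast hcard)
      push_cast
      linarith
    · have hempty {F} (hF : IsSpanningTree S F) : F = ∅ :=
        Finset.card_eq_zero.1 (by have := hF.card_add_one; lia)
      refine ⟨0, by rw [Nat.cast_zero]; positivity, ?_⟩
      rw [hempty hE, hempty (isSpanningTree_starTree ho)]
      exact .refl 0 ∅

theorem IsSpanningTree.exists_reachesIn {E' : Finset (Sym2 α)} (hE : IsSpanningTree S E)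
    (hE' : IsSpanningTree S E') (hk : Set.InjOn k S) (hnc : Noncrossing k (E : Set (Sym2 α)))
    (hnc' : Noncrossing k (E' : Set (Sym2 α))) :
    ∃ m : ℕ, m ≤ 1800 * Real.log S.card ∧ ReachesIn (IsSimSlide k S) m E E' := by
  obtain ⟨o, ho, hmax⟩ := S.exists_max_image k hE.nonempty
  obtain ⟨m, hm, hreach⟩ := hE.exists_reachesIn_starTree hk hnc ho hmax
  obtain ⟨m', hm', hreach'⟩ := hE'.exists_reachesIn_starTree hk hnc' ho hmax
  refine ⟨m + m', ?_, hreach.trans (hreach'.symm fun _ _ => IsSimSlide.symm)⟩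
  push_cast
  linarith

end Round

section Orientation

variable {a b c d p q r x z : Pt}

/-- Twice the signed area of the triangle `p q r`, positive when it is oriented counterclockwise. -/
def ori (p q r : Pt) : ℝ := (q.1 - p.1) * (r.2 - p.2) - (q.2 - p.2) * (r.1 - p.1)

theorem ori_swap_left (a b c : Pt) : ori b a c = -ori a b c := by simp only [ori]; ring

theorem ori_swap_right (a b c : Pt) : ori a c b = -ori a b c := by simp only [ori]; ring

theorem ori_rotate (a b c : Pt) : ori c a b = ori a b c := by simp only [ori]; ring

@[simp]
theorem ori_left (a b : Pt) : ori a b a = 0 := by simp only [ori]; ring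

@[simp]
theorem ori_right (a b : Pt) : ori a b b = 0 := by simp only [ori]; ring

theorem ori_add_ori_sub_ori (p a b c : Pt) :
    ori p a b + ori p b c - ori p a c = ori a b c := by
  simp only [ori]; ring

theorem ori_smul_add_smul {s t : ℝ} (hst : s + t = 1) :
    ori a b (s • c + t • d) = s * ori a b c + t * ori a b d := by
  obtain rfl := eq_sub_of_add_eq hst
  simp only [ori, Prod.fst_add, Prod.snd_add, Prod.smul_fst, Prod.smul_snd, smul_eq_mul]
  ring

theorem ori_eq_zero_of_mem_segment (hx : x ∈ segment ℝ a b) : ori a b x = 0 := by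
  obtain ⟨s, t, -, -, hst, rfl⟩ := hx
  simp [ori_smul_add_smul hst]

theorem convex_setOf_ori_nonneg (a b : Pt) : Convex ℝ {x | 0 ≤ ori a b x} := by
  intro x hx y hy s t hs ht hst
  rw [Set.mem_ofPred_eq] at hx hy ⊢
  rw [ori_smul_add_smul hst]
  positivity

open Topology in
theorem ori_pos_of_mem_interior {K : Set Pt} (hab : a ≠ b) (hK : ∀ x ∈ K, 0 ≤ ori a b x)
    (hz : z ∈ interior K) : 0 < ori a b z := by
  have hshift : Filter.Tendsto (fun ε : ℝ => z + ε • (-(b.2 - a.2), b.1 - a.1)) (𝓝 0) (𝓝 z) :=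
    Continuous.tendsto' (by fun_prop) _ _ (by simp)
  have hev : ∀ᶠ ε in 𝓝[<] (0 : ℝ), z + ε • (-(b.2 - a.2), b.1 - a.1) ∈ K :=
    hshift.mono_left nhdsWithin_le_nhds (mem_interior_iff_mem_nhds.1 hz)
  obtain ⟨ε, hεK, hε⟩ := (hev.and self_mem_nhdsWithin).exists
  have hsum : 0 < (b.1 - a.1) ^ 2 + (b.2 - a.2) ^ 2 := by
    rcases not_and_or.1 (mt Prod.ext_iff.2 hab) with h | h <;>
      have := sq_pos_of_ne_zero (sub_ne_zero.2 (Ne.symm h)) <;> positivity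
  have heq : ori a b (z + ε • (-(b.2 - a.2), b.1 - a.1)) =
      ori a b z + ε * ((b.1 - a.1) ^ 2 + (b.2 - a.2) ^ 2) := by
    simp only [ori, Prod.fst_add, Prod.snd_add, Prod.smul_fst, Prod.smul_snd, smul_eq_mul]
    ring
  have := hK _ hεK
  have := mul_neg_of_neg_of_pos hε hsum
  linarith

theorem exists_mem_segment_mem_segment (hcd : ori a b c * ori a b d < 0)
    (hab : ori c d a * ori c d b < 0) : ∃ x ∈ segment ℝ a b, x ∈ segment ℝ c d := by
  have weights {u v : ℝ} (huv : u * v < 0) :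
      0 ≤ -v / (u - v) ∧ 0 ≤ u / (u - v) ∧ -v / (u - v) + u / (u - v) = 1 := by
    rcases mul_neg_iff.1 huv with ⟨hu, hv⟩ | ⟨hu, hv⟩
    · have : 0 < u - v := by linarith
      exact ⟨by apply div_nonneg <;> linarith, by positivity, by field_simp; ring⟩
    · have : u - v < 0 := by linarith
      exact ⟨by apply div_nonneg_of_nonpos <;> linarith, by apply div_nonneg_of_nonpos <;> linarith,
        by field_simp [this.ne]; ring⟩
  obtain ⟨hc, hd, hcd_sum⟩ := weights hcd
  obtain ⟨ha, hb, hab_sum⟩ := weights hab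
  refine ⟨_, ⟨_, _, ha, hb, hab_sum, rfl⟩, _, _, hc, hd, hcd_sum, ?_⟩
  have hne : ori a b c - ori a b d ≠ 0 := fun h => by simp [h] at hcd_sum
  have hdenom : ori c d a - ori c d b = -(ori a b c - ori a b d) := by simp only [ori]; ring
  rw [hdenom]
  ext <;>
    simp only [Prod.fst_add, Prod.smul_fst, Prod.snd_add, Prod.smul_snd, smul_eq_mul] <;>
    field_simp <;> simp only [ori] <;> ring

theorem mem_convexHull_triple_of_ori (hpac : 0 < ori p a c) (hpab : 0 ≤ ori p a b)
    (hpbc : 0 ≤ ori p b c) (habc : ori a b c ≤ 0) : b ∈ convexHull ℝ {p, a, c} := by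
  have hsum := ori_add_ori_sub_ori p a b c
  have hmem {v} (hv : v ∈ ({p, a, c} : Set Pt)) := subset_convexHull ℝ {p, a, c} hv
  -- barycentric coordinates as ratios of areas
  have hcomb : b = (-ori a b c / ori p a c) • p + (ori p b c / ori p a c) • a +
      (ori p a b / ori p a c) • c := by
    ext <;>
      simp only [Prod.fst_add, Prod.smul_fst, Prod.snd_add, Prod.smul_snd, smul_eq_mul] <;>
      field_simp <;> simp only [ori] <;> ring
  have := (convex_convexHull ℝ {p, a, c}).sum_mem (t := Finset.univ)
    (w := ![-ori a b c / ori p a c, ori p b c / ori p a c, ori p a b / ori p a c])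
    (z := ![p, a, c])
    (by intro i _; fin_cases i <;> exact div_nonneg (by simpa) hpac.le)
    (by rw [Fin.sum_univ_three]; simp; field_simp; linarith)
    (by intro i _; fin_cases i <;> exact hmem (by simp))
  rw [hcomb]
  simpa [Fin.sum_univ_three] using this

end Orientation

section ConvexKey

variable {S : Finset Pt} {n p a b c d q r : Pt}

/-- The component of `v - p` in the direction `n`, up to the factor `‖n‖`. -/
def componentAlong (n p v : Pt) : ℝ := n.1 * (v.1 - p.1) + n.2 * (v.2 - p.2)

/-- The slope of the ray from `p` to `v` in the orthogonal frame whose first axis is `n`. It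
increases counterclockwise around `p` on the open half-plane `0 < componentAlong n p v`. -/
def slopeAround (n p v : Pt) : ℝ := componentAlong (-n.2, n.1) p v / componentAlong n p v

theorem slopeAround_lt_slopeAround_iff (ha : 0 < componentAlong n p a)
    (hb : 0 < componentAlong n p b) :
    slopeAround n p a < slopeAround n p b ↔ 0 < ori p a b := by
  have hn : 0 < n.1 ^ 2 + n.2 ^ 2 := by
    have : n.1 ≠ 0 ∨ n.2 ≠ 0 := by
      by_contra! h
      simp [componentAlong, h] at ha
    rcases this with h | h <;> positivity
  have harea : componentAlong (-n.2, n.1) p b * componentAlong n p a -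
      componentAlong (-n.2, n.1) p a * componentAlong n p b =
      ori p a b * (n.1 ^ 2 + n.2 ^ 2) := by
    simp only [ori, componentAlong]; ring
  rw [slopeAround, slopeAround, div_lt_div_iff₀ ha hb, ← sub_pos, harea,
    mul_pos_iff_of_pos_right hn]

theorem mem_segment_of_ori_eq_zero (ha : 0 < componentAlong n p a)
    (hab : componentAlong n p a ≤ componentAlong n p b) (h : ori p a b = 0) :
    a ∈ segment ℝ p b := by
  have hb := ha.trans_le hab
  rw [segment_eq_image']
  refine ⟨componentAlong n p a / componentAlong n p b,
    ⟨by positivity, (div_le_one hb).2 hab⟩, ?_⟩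
  have hfst : componentAlong n p a * (b.1 - p.1) = componentAlong n p b * (a.1 - p.1) := by
    rw [← sub_eq_zero]
    calc _ = -n.2 * ori p a b := by simp only [componentAlong, ori]; ring
      _ = 0 := by rw [h, mul_zero]
  have hsnd : componentAlong n p a * (b.2 - p.2) = componentAlong n p b * (a.2 - p.2) := by
    rw [← sub_eq_zero]
    calc _ = n.1 * ori p a b := by simp only [componentAlong, ori]; ring
      _ = 0 := by rw [h, mul_zero]
  ext
  · simp [div_mul_eq_mul_div, hfst, hb.ne']
  · simp [div_mul_eq_mul_div, hsnd, hb.ne']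

namespace ConvexPos

theorem notMem_convexHull {T : Set Pt} (hS : ConvexPos S) (hp : p ∈ S) (hT : T ⊆ S)
    (hpT : p ∉ T) : p ∉ convexHull ℝ T :=
  fun h => hS p hp (convexHull_mono (Set.subset_sdiff_singleton hT hpT) h)

theorem notMem_segment (hS : ConvexPos S) (hp : p ∈ S) (ha : a ∈ S) (hb : b ∈ S) (hpa : p ≠ a)
    (hpb : p ≠ b) : p ∉ segment ℝ a b := by
  rw [← convexHull_pair]
  exact hS.notMem_convexHull hp (by simp [Set.insert_subset_iff, ha, hb]) (by simp [hpa, hpb])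

theorem exists_componentAlong_pos (hS : ConvexPos S) (hp : p ∈ S) :
    ∃ n, ∀ v ∈ S, v ≠ p → 0 < componentAlong n p v := by
  obtain ⟨f, u, hfp, hfS⟩ := geometric_hahn_banach_point_closed (convex_convexHull ℝ _)
    ((S.finite_toSet.subset Set.sdiff_subset).isClosed_convexHull ℝ) (hS p hp)
  have hf (v : Pt) : f v = f (1, 0) * v.1 + f (0, 1) * v.2 := by
    have hv : v = v.1 • ((1, 0) : Pt) + v.2 • ((0, 1) : Pt) := by ext <;> simp
    conv_lhs => rw [hv, map_add, map_smul, map_smul, smul_eq_mul, smul_eq_mul]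
    ring
  refine ⟨(f (1, 0), f (0, 1)), fun v hv hvp => ?_⟩
  have hfv := hfp.trans (hfS v (subset_convexHull ℝ _ ⟨hv, hvp⟩))
  rw [hf, hf v] at hfv
  simp only [componentAlong]
  linarith

theorem injOn_slopeAround (hS : ConvexPos S) (hp : p ∈ S)
    (hn : ∀ v ∈ S, v ≠ p → 0 < componentAlong n p v) :
    Set.InjOn (slopeAround n p) (S \ {p} : Set Pt) := by
  intro a ⟨ha, hap⟩ b ⟨hb, hbp⟩ hab
  by_contra hne
  wlog hle : componentAlong n p a ≤ componentAlong n p b generalizing a b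
  · exact this hb hbp ha hap hab.symm (Ne.symm hne) (le_of_not_ge hle)
  have hposa := hn a ha hap
  have hposb := hn b hb hbp
  have hori : ori p a b = 0 := by
    have hle := (slopeAround_lt_slopeAround_iff hposa hposb).not.1 hab.not_lt
    have hge := (slopeAround_lt_slopeAround_iff hposb hposa).not.1 hab.not_gt
    rw [ori_swap_right] at hge
    linarith
  exact hS.notMem_segment ha hp hb hap hne (mem_segment_of_ori_eq_zero hposa hle hori)

end ConvexPos

/-- `k` lists the points of `S` in counterclockwise order along their convex hull. -/
structure IsConvexKey {ι : Type*} [LinearOrder ι] (S : Finset Pt) (k : Pt → ι) : Prop where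
  injOn : Set.InjOn k S
  ori_pos : ∀ a ∈ S, ∀ b ∈ S, ∀ c ∈ S, k a < k b → k b < k c → 0 < ori a b c

theorem ConvexPos.exists_isConvexKey (hS : ConvexPos S) :
    ∃ k : Pt → WithBot ℝ, IsConvexKey S k := by
  rcases S.eq_empty_or_nonempty with rfl | ⟨p, hp⟩
  · exact ⟨fun _ => ⊥, by simp, by simp⟩
  obtain ⟨n, hn⟩ := hS.exists_componentAlong_pos hp
  have hinj := hS.injOn_slopeAround hp hn
  let k (v : Pt) : WithBot ℝ := if v = p then ⊥ else slopeAround n p v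
  have hk {v} (hv : v ≠ p) : k v = slopeAround n p v := if_neg hv
  have hne_of_lt {a b} (hab : k a < k b) : b ≠ p := by
    rintro rfl
    simp [k] at hab
  have hori {a b} (ha : a ∈ S) (hb : b ∈ S) (hap : a ≠ p) (hab : k a < k b) : 0 < ori p a b := by
    have hbp := hne_of_lt hab
    rw [hk hap, hk hbp, WithBot.coe_lt_coe] at hab
    exact (slopeAround_lt_slopeAround_iff (hn a ha hap) (hn b hb hbp)).1 hab
  refine ⟨k, fun a ha b hb hab => ?_, fun a ha b hb c hc hab hbc => ?_⟩
  · by_cases hap : a = p <;> by_cases hbp : b = p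
    · rw [hap, hbp]
    · simp [hap, k, hbp] at hab
    · simp [hap, k, hbp] at hab
    · rw [hk hap, hk hbp, WithBot.coe_inj] at hab
      exact hinj ⟨ha, hap⟩ ⟨hb, hbp⟩ hab
  · have hbp := hne_of_lt hab
    have hpbc := hori hb hc hbp hbc
    by_cases hap : a = p
    · rwa [hap]
    by_contra! hle
    refine hS.notMem_convexHull hb (by simp [Set.insert_subset_iff, hp, ha, hc]) ?_
      (mem_convexHull_triple_of_ori (hori ha hc hap (hab.trans hbc)) (hori ha hb hap hab).le
        hpbc.le hle)
    simp [hbp, ne_of_apply_ne k hab.ne', ne_of_apply_ne k hbc.ne]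

namespace IsConvexKey

variable {ι : Type*} [LinearOrder ι] {k : Pt → ι} {E E₁ E₂ : Finset (Sym2 Pt)}

theorem ori_neg_of_mem_Ioo (hk : IsConvexKey S k) (ha : a ∈ S) (hb : b ∈ S) (hc : c ∈ S)
    (h : k c ∈ Set.Ioo (k a) (k b)) : ori a b c < 0 := by
  rw [ori_swap_right, neg_lt_zero]
  exact hk.ori_pos a ha c hc b hb h.1 h.2

theorem ori_pos_of_notMem_Icc (hk : IsConvexKey S k) (ha : a ∈ S) (hb : b ∈ S) (hc : c ∈ S)
    (hab : k a < k b) (h : k c ∉ Set.Icc (k a) (k b)) : 0 < ori a b c := by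
  rcases not_and_or.1 h with h | h
  · rw [← ori_rotate]
    exact hk.ori_pos c hc a ha b hb (not_le.1 h) hab
  · exact hk.ori_pos a ha b hb c hc hab (not_le.1 h)

theorem ori_trichotomy (hk : IsConvexKey S k) (ha : a ∈ S) (hb : b ∈ S) (hc : c ∈ S)
    (hab : k a < k b) : c = a ∨ c = b ∨ (k c ∈ Set.Ioo (k a) (k b) ∧ ori a b c < 0) ∨
      (k c ∉ Set.Icc (k a) (k b) ∧ 0 < ori a b c) := by
  by_cases hIcc : k c ∈ Set.Icc (k a) (k b)
  · rcases Set.eq_endpoints_or_mem_Ioo_of_mem_Icc hIcc with h | h | h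
    · exact .inl (hk.injOn hc ha h)
    · exact .inr (.inl (hk.injOn hc hb h))
    · exact .inr (.inr (.inl ⟨h, hk.ori_neg_of_mem_Ioo ha hb hc h⟩))
  · exact .inr (.inr (.inr ⟨hIcc, hk.ori_pos_of_notMem_Icc ha hb hc hab hIcc⟩))

theorem eq_or_eq_of_ori_eq_zero (hk : IsConvexKey S k) (ha : a ∈ S) (hb : b ∈ S) (hc : c ∈ S)
    (hab : a ≠ b) (h : ori a b c = 0) : c = a ∨ c = b := by
  wlog hlt : k a < k b generalizing a b
  · refine (this hb ha hab.symm (by rw [ori_swap_left, h, neg_zero]) ?_).symm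
    exact (not_lt.1 hlt).lt_of_ne fun heq => hab.symm (hk.injOn hb ha heq)
  rcases hk.ori_trichotomy ha hb hc hlt with hca | hcb | ⟨-, hneg⟩ | ⟨-, hpos⟩
  · exact .inl hca
  · exact .inr hcb
  · exact absurd h hneg.ne
  · exact absurd h hpos.ne'

theorem ori_mul_ori_neg (hk : IsConvexKey S k) (ha : a ∈ S) (hb : b ∈ S) (hc : c ∈ S)
    (hd : d ∈ S) (h : Interlace k a b c d) : ori a b c * ori a b d < 0 := by
  wlog hab : k a ≤ k b generalizing a b
  · have := this hb ha (interlace_swap_left.1 h) (le_of_not_ge hab)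
    rwa [ori_swap_left a b c, ori_swap_left a b d, neg_mul_neg] at this
  rw [Interlace, Set.uIoo_of_le hab, Set.uIcc_of_le hab] at h
  rcases h with ⟨hcin, hdout⟩ | ⟨hdin, hcout⟩
  · exact mul_neg_of_neg_of_pos (hk.ori_neg_of_mem_Ioo ha hb hc hcin)
      (hk.ori_pos_of_notMem_Icc ha hb hd (hcin.1.trans hcin.2) hdout)
  · exact mul_neg_of_pos_of_neg (hk.ori_pos_of_notMem_Icc ha hb hc (hdin.1.trans hdin.2) hcout)
      (hk.ori_neg_of_mem_Ioo ha hb hd hdin)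

theorem ori_mul_ori_nonneg (hk : IsConvexKey S k) (ha : a ∈ S) (hb : b ∈ S) (hc : c ∈ S)
    (hd : d ∈ S) (h : ¬ Interlace k a b c d) : 0 ≤ ori a b c * ori a b d := by
  wlog hab : k a ≤ k b generalizing a b
  · have := this hb ha (fun h' => h (interlace_swap_left.1 h')) (le_of_not_ge hab)
    rwa [ori_swap_left a b c, ori_swap_left a b d, neg_mul_neg] at this
  rcases hab.eq_or_lt with heq | hlt
  · simp [hk.injOn ha hb heq, ori]
  rw [Interlace, Set.uIoo_of_le hab, Set.uIcc_of_le hab] at h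
  rcases hk.ori_trichotomy ha hb hc hlt with rfl | rfl | ⟨hcin, hcneg⟩ | ⟨hcout, hcpos⟩
  · simp
  · simp
  · rcases hk.ori_trichotomy ha hb hd hlt with rfl | rfl | ⟨-, hdneg⟩ | ⟨hdout, -⟩
    · simp
    · simp
    · exact (mul_pos_of_neg_of_neg hcneg hdneg).le
    · exact absurd (.inl ⟨hcin, hdout⟩) h
  · rcases hk.ori_trichotomy ha hb hd hlt with rfl | rfl | ⟨hdin, -⟩ | ⟨-, hdpos⟩
    · simp
    · simp
    · exact absurd (.inr ⟨hdin, hcout⟩) h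
    · positivity

theorem not_noCrossPair (hk : IsConvexKey S k) (ha : a ∈ S) (hb : b ∈ S) (hc : c ∈ S)
    (hd : d ∈ S) (h : Interlace k a b c d) : ¬ NoCrossPair s(a, b) s(c, d) := by
  intro hnc
  have hcd := hk.ori_mul_ori_neg ha hb hc hd h
  obtain ⟨x, hxab, hxcd⟩ :=
    exists_mem_segment_mem_segment hcd (hk.ori_mul_ori_neg hc hd ha hb h.symm)
  have hori := ori_eq_zero_of_mem_segment hxab
  rcases Sym2.mem_iff.1 (hnc ⟨hxab, hxcd⟩).2 with rfl | rfl <;> simp [hori] at hcd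

theorem noCrossPair (hk : IsConvexKey S k) (ha : a ∈ S) (hb : b ∈ S) (hc : c ∈ S) (hd : d ∈ S)
    (hab : a ≠ b) (hcd : c ≠ d) (hne : s(a, b) ≠ s(c, d)) (h : ¬ Interlace k a b c d) :
    NoCrossPair s(a, b) s(c, d) := by
  rintro x ⟨hxab, hxcd⟩
  have hx := ori_eq_zero_of_mem_segment hxab
  obtain ⟨s, t, hs, ht, hst, rfl⟩ := hxcd
  have hsame := hk.ori_mul_ori_nonneg ha hb hc hd h
  rw [ori_smul_add_smul hst] at hx
  have hszero : s * ori a b c = 0 := by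
    have : t * ori a b d = -(s * ori a b c) := by linarith
    nlinarith [mul_nonneg (mul_nonneg hs ht) hsame]
  have htzero : t * ori a b d = 0 := by linarith
  have hendpoint {v} (hv : v ∈ S) (hori : ori a b v = 0) : v ∈ epts s(a, b) :=
    Sym2.mem_iff.2 (hk.eq_or_eq_of_ori_eq_zero ha hb hv hab hori)
  rcases mul_eq_zero.1 hszero with rfl | hc0
  · obtain rfl : t = 1 := by linarith
    simpa [epts] using hendpoint hd (by simpa using htzero)
  rcases mul_eq_zero.1 htzero with rfl | hd0
  · obtain rfl : s = 1 := by linarith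
    simpa [epts] using hendpoint hc hc0
  refine absurd ?_ hne
  rw [Sym2.eq_iff]
  rcases hk.eq_or_eq_of_ori_eq_zero ha hb hc hab hc0 with rfl | rfl <;>
    rcases hk.eq_or_eq_of_ori_eq_zero ha hb hd hab hd0 with rfl | rfl <;> simp_all

theorem disjoint_segOf_interior_convexHull {K : Set Pt} (hk : IsConvexKey S k) (ha : a ∈ S)
    (hb : b ∈ S) (hab : a ≠ b) (hK : K ⊆ S)
    (h : ∀ x ∈ K, ∀ y ∈ K, ¬ Interlace k a b x y) :
    Disjoint (segOf s(a, b)) (interior (convexHull ℝ K)) := by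
  have hside : (∀ x ∈ K, 0 ≤ ori a b x) ∨ (∀ x ∈ K, 0 ≤ ori b a x) := by
    by_contra! hcon
    obtain ⟨⟨x, hx, hxneg⟩, y, hy, hyneg⟩ := hcon
    rw [ori_swap_left, neg_lt_zero] at hyneg
    have := hk.ori_mul_ori_nonneg ha hb (hK hx) (hK hy) (h x hx y hy)
    exact this.not_gt (mul_neg_of_neg_of_pos hxneg hyneg)
  rw [Set.disjoint_left]
  intro z hzab hz
  have hzero := ori_eq_zero_of_mem_segment hzab
  rcases hside with hside | hside
  · have hhull := convexHull_min hside (convex_setOf_ori_nonneg a b)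
    exact (ori_pos_of_mem_interior hab hhull hz).ne' hzero
  · have hhull := convexHull_min hside (convex_setOf_ori_nonneg b a)
    have := ori_pos_of_mem_interior hab.symm hhull hz
    rw [ori_swap_left, hzero, neg_zero] at this
    exact this.false

theorem disjoint_segOf_triInt (hk : IsConvexKey S k) (ha : a ∈ S) (hb : b ∈ S) (hp : p ∈ S)
    (hq : q ∈ S) (hr : r ∈ S) (hab : a ≠ b) (hpq : ¬ Interlace k a b p q)
    (hqr : ¬ Interlace k a b q r) (hpr : ¬ Interlace k a b p r) :
    Disjoint (segOf s(a, b)) (triInt p q r) := by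
  refine hk.disjoint_segOf_interior_convexHull ha hb hab
    (by simp [Set.insert_subset_iff, hp, hq, hr]) ?_
  have hself (v : Pt) : ¬ Interlace k a b v v := by grind [interlace_iff]
  have hswap {u v : Pt} (h : ¬ Interlace k a b u v) : ¬ Interlace k a b v u :=
    interlace_swap_right.not.1 h
  simp [hself, hpq, hqr, hpr, hswap hpq, hswap hqr, hswap hpr]

theorem noncrossing_of_isPST (hk : IsConvexKey S k) (hE : IsPST S E) :
    Noncrossing k (E : Set (Sym2 Pt)) := by
  obtain ⟨hedge, hnc, -⟩ := hE
  rintro ⟨a, b⟩ hab ⟨c, d⟩ hcd (h : Interlace k a b c d)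
  have ha := (hedge _ hab).2 a (Sym2.mem_mk_left a b)
  have hb := (hedge _ hab).2 b (Sym2.mem_mk_right a b)
  have hc := (hedge _ hcd).2 c (Sym2.mem_mk_left c d)
  have hd := (hedge _ hcd).2 d (Sym2.mem_mk_right c d)
  refine hk.not_noCrossPair ha hb hc hd h (hnc _ hab _ hcd fun heq => ?_)
  have hne := h.key_ne
  rcases Sym2.eq_iff.1 heq with ⟨rfl, -⟩ | ⟨rfl, -⟩
  · exact hne.1 rfl
  · exact hne.2.1 rfl

theorem isPST (hk : IsConvexKey S k) (hE : IsSpanningTree S E)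
    (hnc : Noncrossing k (E : Set (Sym2 Pt))) : IsPST S E := by
  refine ⟨fun e he => ⟨hE.not_isDiag e he, hE.mem_of_mem e he⟩, ?_, hE.card_add_one, ?_⟩
  · rintro ⟨a, b⟩ hab ⟨c, d⟩ hcd hne
    exact hk.noCrossPair (hE.left_mem hab) (hE.right_mem hab) (hE.left_mem hcd)
      (hE.right_mem hcd) (hE.ne hab) (hE.ne hcd) hne (hnc _ hab _ hcd)
  · intro a ha b hb
    exact Relation.ReflTransGen.mono (fun _ _ => hE.adj_iff.1) _ _
      ((SimpleGraph.reachable_iff_reflTransGen a b).1 (hE.reachable a ha b hb))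

theorem simEdgeSlide (hk : IsConvexKey S k) (h : IsSimSlide k S E₁ E₂) :
    SimEdgeSlide S E₁ E₂ := by
  obtain ⟨hE₁, hE₂, hnc, π, hπ, hslide⟩ := h
  refine ⟨hk.isPST hE₁ (hnc.mono Set.subset_union_left),
    hk.isPST hE₂ (hnc.mono Set.subset_union_right), π, by simpa only [Finset.coe_sdiff], ?_⟩
  intro e he
  obtain ⟨he₁, he₂⟩ := Finset.mem_sdiff.1 he
  have hπe : π e ∈ E₂ := (hπ.mapsTo ⟨he₁, he₂⟩).1
  obtain ⟨p, q, r, rfl, hpr, hqr₁, hqr₂⟩ := hslide e he₁ he₂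
  rw [hpr] at hπe
  refine ⟨p, q, r, rfl, hpr, hqr₁, hqr₂, ?_⟩
  rintro ⟨a, b⟩ hab
  have hab' : s(a, b) ∈ (E₁ ∪ E₂ : Set (Sym2 Pt)) := Finset.mem_union.1 hab
  obtain ⟨ha, hb, hne⟩ : a ∈ S ∧ b ∈ S ∧ a ≠ b := hab'.elim
    (fun h => ⟨hE₁.left_mem h, hE₁.right_mem h, hE₁.ne h⟩)
    (fun h => ⟨hE₂.left_mem h, hE₂.right_mem h, hE₂.ne h⟩)
  exact hk.disjoint_segOf_triInt ha hb (hE₁.left_mem he₁) (hE₁.right_mem he₁)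
    (hE₁.right_mem hqr₁) hne (hnc _ hab' _ (.inl he₁)) (hnc _ hab' _ (.inl hqr₁))
    (hnc _ hab' _ (.inr hπe))

end IsConvexKey

theorem IsPST.isSpanningTree {E : Finset (Sym2 Pt)} (hE : IsPST S E) : IsSpanningTree S E := by
  obtain ⟨hedge, -, hcard, hconn⟩ := hE
  refine ⟨fun e he => (hedge e he).1, fun e he => (hedge e he).2, hcard, fun a ha b hb => ?_⟩
  have hadj (x y : Pt) (hxy : s(x, y) ∈ E) : (graphOf E).Adj x y :=
    graphOf_adj.2 ⟨hxy, (hedge _ hxy).1⟩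
  exact (SimpleGraph.reachable_iff_reflTransGen a b).2
    (Relation.ReflTransGen.mono hadj a b (hconn a ha b hb))

end ConvexKey

/-- on `n` points in convex position, any two trees are connected by `O(log n)`
simultaneous edge slides. -/
theorem stmt_12 :
    ∃ c : ℝ, 0 < c ∧ ∀ n : ℕ, 2 ≤ n → ∀ S : Finset Pt, S.card = n → ConvexPos S →
      ∀ E E' : Finset (Sym2 Pt), IsPST S E → IsPST S E' →
        ∃ m : ℕ, (m : ℝ) ≤ c * Real.log n ∧ ReachesIn (SimEdgeSlide S) m E E' := by
  refine ⟨1800, by norm_num, ?_⟩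
  rintro _ - S rfl hS E E' hE hE'
  obtain ⟨k, hk⟩ := hS.exists_isConvexKey
  obtain ⟨m, hm, hreach⟩ := hE.isSpanningTree.exists_reachesIn hE'.isSpanningTree hk.injOn
    (hk.noncrossing_of_isPST hE) (hk.noncrossing_of_isPST hE')
  exact ⟨m, hm, hreach.map id fun _ _ => hk.simEdgeSlide⟩
end
end

section
/- Let S be a finite set of n ≥ 2 points in the plane in general position that is not in convex position. Then there exist two trees T_A = (S,E_A), T_B = (S,E_B) ∈ 𝒯(S) that are edge-disjoint (E_A ∩ E_B = ∅) and compatible, i.e., the graph (S, E_A ∪ E_B) is a noncrossing straight-line graph. -/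
open scoped Classical

noncomputable section

/-!
Let `p` be a point of `S` in the convex hull of the others. Seen from `p`, the other points have
a cyclic order in which consecutive points are less than a half-turn apart, so the spokes from `p`
and the rim edges between consecutive points form a noncrossing wheel. For any rim point `l` with
successor `l'`, exchanging the spoke `pl` and the rim edge `ll'` turns the spokes and the rim into
two edge-disjoint spanning trees: a star with the leaf `l` moved to `l'`, and a Hamiltonian path
`l' … l` extended by `p`.
-/

/-! ### Orientation of point triples -/

/-- Twice the signed area of the triangle `p a b`: positive when `b` lies to the left of the
directed line from `p` to `a`. -/
def orient (p a b : Pt) : ℝ := (a.1 - p.1) * (b.2 - p.2) - (a.2 - p.2) * (b.1 - p.1)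

lemma orient_swap (p a b : Pt) : orient p b a = -orient p a b := by
  unfold orient; ring

lemma orient_self_right (p a : Pt) : orient p a a = 0 := by
  unfold orient; ring

lemma orient_self_left (p a : Pt) : orient p p a = 0 := by
  unfold orient; ring

lemma orient_self_outer (p a : Pt) : orient p a p = 0 := by
  unfold orient; ring

lemma orient_plucker (p a b c d : Pt) :
    orient p a b * orient p c d - orient p a c * orient p b d +
      orient p a d * orient p b c = 0 := by
  unfold orient; ring

lemma orient_combo_right (p c a b : Pt) {α β : ℝ} (h : α + β = 1) :
    orient p c (α • a + β • b) = α * orient p c a + β * orient p c b := by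
  obtain rfl : α = 1 - β := by linarith
  simp only [orient, Prod.fst_add, Prod.snd_add, Prod.smul_fst, Prod.smul_snd, smul_eq_mul]
  ring

lemma orient_combo_left (p c a b : Pt) {α β : ℝ} (h : α + β = 1) :
    orient p (α • a + β • b) c = α * orient p a c + β * orient p b c := by
  rw [orient_swap, orient_combo_right p c a b h, orient_swap p a c, orient_swap p b c]
  ring

lemma sq_add_sq_sub_pos {p a : Pt} (h : a ≠ p) : 0 < (a.1 - p.1) ^ 2 + (a.2 - p.2) ^ 2 := by
  by_contra! hle
  have hfst : a.1 - p.1 = 0 := by nlinarith [sq_nonneg (a.1 - p.1), sq_nonneg (a.2 - p.2)]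
  have hsnd : a.2 - p.2 = 0 := by nlinarith [sq_nonneg (a.1 - p.1), sq_nonneg (a.2 - p.2)]
  exact h (Prod.ext (sub_eq_zero.mp hfst) (sub_eq_zero.mp hsnd))

lemma collinear_of_orient_eq_zero {p a b : Pt} (h : orient p a b = 0) :
    Collinear ℝ ({p, a, b} : Set Pt) := by
  rcases eq_or_ne a p with rfl | hap
  · simpa using collinear_pair ℝ a b
  have hpos := sq_add_sq_sub_pos hap
  -- `t` is the parameter of the orthogonal projection of `b` onto the line `pa`
  let t : ℝ := ((a.1 - p.1) * (b.1 - p.1) + (a.2 - p.2) * (b.2 - p.2)) /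
    ((a.1 - p.1) ^ 2 + (a.2 - p.2) ^ 2)
  have hb : AffineMap.lineMap p a t = b := by
    unfold orient at h
    ext <;> simp only [AffineMap.lineMap_apply_module', Prod.fst_add, Prod.snd_add,
      Prod.smul_fst, Prod.smul_snd, Prod.fst_sub, Prod.snd_sub, smul_eq_mul, t] <;> field_simp
    · linear_combination (a.2 - p.2) * h
    · linear_combination -(a.1 - p.1) * h
  have hcol : Collinear ℝ ({b, p, a} : Set Pt) :=
    collinear_insert_of_mem_affineSpan_pair (hb ▸ AffineMap.lineMap_mem_affineSpan_pair t p a)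
  rwa [Set.insert_comm, Set.pair_comm b a] at hcol

lemma linearIndependent_sub_of_orient_ne_zero {p a b : Pt} (h : orient p a b ≠ 0) :
    LinearIndependent ℝ ![a - p, b - p] := by
  rw [LinearIndependent.pair_iff]
  intro s t hst
  have hfst : s * (a.1 - p.1) + t * (b.1 - p.1) = 0 := by simpa using congrArg Prod.fst hst
  have hsnd : s * (a.2 - p.2) + t * (b.2 - p.2) = 0 := by simpa using congrArg Prod.snd hst
  have hs : s * orient p a b = 0 := by
    unfold orient; linear_combination (b.2 - p.2) * hfst - (b.1 - p.1) * hsnd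
  have ht : t * orient p a b = 0 := by
    unfold orient; linear_combination (a.1 - p.1) * hsnd - (a.2 - p.2) * hfst
  exact ⟨(mul_eq_zero.mp hs).resolve_right h, (mul_eq_zero.mp ht).resolve_right h⟩

lemma orient_eq_zero_of_mem_segment {p c x : Pt} (hx : x ∈ segment ℝ p c) :
    orient p x c = 0 := by
  obtain ⟨α, β, -, -, hαβ, rfl⟩ := hx
  rw [orient_combo_left p c p c hαβ, orient_self_left, orient_self_right]
  ring

lemma convex_setOf_orient_neg (p a : Pt) : Convex ℝ {x | orient p a x < 0} := by
  refine convex_iff_forall_pos.mpr fun x hx y hy α β hα hβ hαβ => ?_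
  simp only [Set.mem_ofPred_eq] at hx hy ⊢
  rw [orient_combo_right p a x y hαβ]
  exact add_neg (mul_neg_of_pos_of_neg hα hx) (mul_neg_of_pos_of_neg hβ hy)

lemma exists_orient_pos_of_mem_convexHull {p a : Pt} {Q : Set Pt} (hp : p ∉ Q)
    (hull : p ∈ convexHull ℝ Q) (ha : a ∈ Q) (hQ : ∀ b ∈ Q, b ≠ a → orient p a b ≠ 0) :
    ∃ b ∈ Q, 0 < orient p a b := by
  by_contra! hnonpos
  have hneg : Q \ {a} ⊆ {x | orient p a x < 0} := fun b hb =>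
    (hnonpos b hb.1).lt_of_ne (hQ b hb.1 hb.2)
  have hap : a ≠ p := fun h => hp (h ▸ ha)
  rw [← Set.insert_sdiff_self_of_mem ha] at hull
  rcases (Q \ {a}).eq_empty_or_nonempty with hempty | hne
  · rw [hempty, insert_empty_eq, convexHull_singleton] at hull
    exact hap hull.symm
  rw [convexHull_insert hne, convexJoin_singleton_left, Set.mem_iUnion₂] at hull
  obtain ⟨z, hz, hpz⟩ := hull
  have hz_neg : orient p a z < 0 := convexHull_min hneg (convex_setOf_orient_neg p a) hz
  obtain ⟨α, β, -, -, hαβ, hcombo⟩ := hpz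
  have hβz : β * orient p a z = 0 := by
    have := orient_combo_right p a a z hαβ
    rw [hcombo, orient_self_outer, orient_self_right] at this
    linarith
  obtain rfl : β = 0 := (mul_eq_zero.mp hβz).resolve_right hz_neg.ne
  obtain rfl : α = 1 := by linarith
  exact hap (by simpa using hcombo)

/-! ### Angular order in a half-plane -/

/-- The cotangent of the oriented angle at `p` from `s` to `x`. On either side of the line `ps`,
comparing cotangents amounts to comparing points by angle around `p`. On the line itself the
value is the junk `0`. -/
def cotAngle (p s x : Pt) : ℝ :=
  ((s.1 - p.1) * (x.1 - p.1) + (s.2 - p.2) * (x.2 - p.2)) / orient p s x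

lemma cotAngle_lt_cotAngle_iff {p s x y : Pt} (h : 0 < orient p s x * orient p s y) :
    cotAngle p s y < cotAngle p s x ↔ 0 < orient p x y := by
  have hx : orient p s x ≠ 0 := left_ne_zero_of_mul h.ne'
  have hy : orient p s y ≠ 0 := right_ne_zero_of_mul h.ne'
  have hsp : s ≠ p := by rintro rfl; exact hx (orient_self_left s x)
  have hdiff : cotAngle p s x - cotAngle p s y =
      ((s.1 - p.1) ^ 2 + (s.2 - p.2) ^ 2) / (orient p s x * orient p s y) * orient p x y := by
    unfold cotAngle
    field_simp
    unfold orient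
    ring
  rw [← sub_pos, hdiff]
  exact mul_pos_iff_of_pos_left (div_pos (sq_add_sq_sub_pos hsp) h)

lemma not_mapsTo_of_forall_orient_pos {p s : Pt} {F : Finset Pt} {f : Pt → Pt}
    (hF : F.Nonempty) (hside : ∀ x ∈ F, ∀ y ∈ F, 0 < orient p s x * orient p s y)
    (hf : ∀ x ∈ F, 0 < orient p x (f x)) : ¬ Set.MapsTo f F F := by
  intro hmaps
  obtain ⟨b, hb, hmin⟩ := F.exists_min_image (cotAngle p s) hF
  have hlt := (cotAngle_lt_cotAngle_iff (hside b hb (f b) (hmaps hb))).mpr (hf b hb)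
  exact hlt.not_ge (hmin (f b) (hmaps hb))

/-! ### Angular successors -/

/-- The points to the left of the ray from `p` through `a` and to the right of the one through `b`.
If `0 < orient p a b`, this is the open sector at `p` swept counterclockwise from `a` to `b`. -/
def openCone (p a b : Pt) : Set Pt := {x | 0 < orient p a x ∧ 0 < orient p x b}

/-- `b` is the next point of `Q` after `a` in counterclockwise order around `p`, at an angle of
less than a half-turn. -/
structure IsAngularSucc (p : Pt) (Q : Finset Pt) (a b : Pt) : Prop where
  left_mem : a ∈ Q
  right_mem : b ∈ Q
  orient_pos : 0 < orient p a b
  notMem_openCone : ∀ c ∈ Q, c ∉ openCone p a b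

lemma openSegment_subset_openCone {p a b : Pt} (hab : 0 < orient p a b) :
    openSegment ℝ a b ⊆ openCone p a b := by
  rintro _ ⟨α, β, hα, hβ, hαβ, rfl⟩
  constructor
  · rw [orient_combo_right p a a b hαβ, orient_self_right, mul_zero, zero_add]
    exact mul_pos hβ hab
  · rw [orient_combo_left p b a b hαβ, orient_self_right, mul_zero, add_zero]
    exact mul_pos hα hab

lemma mem_openCone_of_mem_segment {p a b c x : Pt} (hx : x ∈ openCone p a b)
    (hxc : x ∈ segment ℝ p c) : c ∈ openCone p a b := by
  obtain ⟨γ, δ, -, hδ, hγδ, rfl⟩ := hxc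
  obtain ⟨hax, hxb⟩ := hx
  rw [orient_combo_right p a p c hγδ, orient_self_outer, mul_zero, zero_add] at hax
  rw [orient_combo_left p b p c hγδ, orient_self_left, mul_zero, zero_add] at hxb
  exact ⟨pos_of_mul_pos_right hax hδ, pos_of_mul_pos_right hxb hδ⟩

lemma mem_openCone_of_orient_pos {p a b c x : Pt} (hab : 0 < orient p a b)
    (hx : x ∈ openCone p a b) (hac : 0 < orient p a c) (hcx : 0 < orient p c x) :
    c ∈ openCone p a b := by
  have hmul : 0 < orient p a x * orient p c b := by
    linarith [orient_plucker p a c x b, mul_pos hac hx.2, mul_pos hab hcx]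
  exact ⟨hac, pos_of_mul_pos_right hmul hx.1.le⟩

lemma exists_isAngularSucc {p a : Pt} {Q : Finset Pt} (hp : p ∉ Q)
    (hull : p ∈ convexHull ℝ (Q : Set Pt)) (ha : a ∈ Q)
    (hQ : ∀ b ∈ Q, b ≠ a → orient p a b ≠ 0) : ∃ b, IsAngularSucc p Q a b := by
  obtain ⟨b₀, hb₀, hab₀⟩ := exists_orient_pos_of_mem_convexHull (by simpa using hp) hull ha hQ
  obtain ⟨b, hb, hmax⟩ := (Q.filter fun x => 0 < orient p a x).exists_max_image (cotAngle p a)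
    ⟨b₀, Finset.mem_filter.mpr ⟨hb₀, hab₀⟩⟩
  obtain ⟨hbQ, hab⟩ := Finset.mem_filter.mp hb
  refine ⟨b, ha, hbQ, hab, fun c hc ⟨hac, hcb⟩ => ?_⟩
  have hlt := (cotAngle_lt_cotAngle_iff (mul_pos hac hab)).mpr hcb
  exact hlt.not_ge (hmax c (Finset.mem_filter.mpr ⟨hc, hac⟩))

/-- No line through `p` contains two distinct points of `Q`. -/
def RadiallyGeneric (p : Pt) (Q : Finset Pt) : Prop :=
  (Q : Set Pt).Pairwise fun a b => orient p a b ≠ 0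

section AngularSucc

variable {p a b c d x : Pt} {Q : Finset Pt}

lemma IsAngularSucc.ne (h : IsAngularSucc p Q a b) : a ≠ b := by
  rintro rfl
  exact h.orient_pos.ne' (orient_self_right p a)

lemma IsAngularSucc.eq_or_mem_openCone (h : IsAngularSucc p Q a b) (hx : x ∈ segment ℝ a b) :
    (x = a ∨ x = b) ∨ x ∈ openCone p a b := by
  rw [← insert_endpoints_openSegment, Set.mem_insert_iff, Set.mem_insert_iff, ← or_assoc] at hx
  exact hx.imp_right fun hx => openSegment_subset_openCone h.orient_pos hx

lemma IsAngularSucc.disjoint_openCone (hQ : RadiallyGeneric p Q)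
    (hab : IsAngularSucc p Q a b) (hcd : IsAngularSucc p Q c d) (hac : a ≠ c) :
    Disjoint (openCone p a b) (openCone p c d) := by
  refine Set.disjoint_left.mpr fun x hxab hxcd => ?_
  rcases (hQ hab.left_mem hcd.left_mem hac).lt_or_gt with hneg | hpos
  · have hca : 0 < orient p c a := by rw [orient_swap]; linarith
    exact hcd.notMem_openCone a hab.left_mem
      (mem_openCone_of_orient_pos hcd.orient_pos hxcd hca hxab.1)
  · exact hab.notMem_openCone c hcd.left_mem
      (mem_openCone_of_orient_pos hab.orient_pos hxab hpos hxcd.1)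

variable {f : Pt → Pt} {O : Finset Pt}

lemma mem_of_mapsTo_angularSucc (hQ : RadiallyGeneric p Q)
    (hf : ∀ a ∈ Q, IsAngularSucc p Q a (f a)) (hOQ : O ⊆ Q) (hO : O.Nonempty)
    (hmaps : Set.MapsTo f O O) (ha : a ∈ Q) : a ∈ O := by
  by_contra haO
  have hne_zero : ∀ x ∈ O, orient p a x ≠ 0 := fun x hx =>
    hQ ha (hOQ hx) (by rintro rfl; exact haO hx)
  have hf_pos : ∀ x ∈ O, 0 < orient p x (f x) := fun x hx => (hf x (hOQ hx)).orient_pos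
  -- No step from `x` to `f x` passes over `a`, so `f` preserves the part of `O` to its right.
  have hmaps_right : Set.MapsTo f (O.filter fun x => orient p a x < 0)
      (O.filter fun x => orient p a x < 0) := by
    intro x hx
    obtain ⟨hxO, hax⟩ := Finset.mem_filter.mp hx
    have hxa : 0 < orient p x a := by rw [orient_swap]; linarith
    have hafx : ¬ 0 < orient p a (f x) := fun hpos =>
      (hf x (hOQ hxO)).notMem_openCone a ha ⟨hxa, hpos⟩
    exact Finset.mem_filter.mpr
      ⟨hmaps hxO, (not_lt.mp hafx).lt_of_ne (hne_zero _ (hmaps hxO))⟩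
  have hleft : ∀ x ∈ O, 0 < orient p a x := by
    by_contra! ⟨x, hx, hax⟩
    refine not_mapsTo_of_forall_orient_pos (p := p) (s := a)
      ⟨x, Finset.mem_filter.mpr ⟨hx, hax.lt_of_ne (hne_zero x hx)⟩⟩ (fun y hy z hz => ?_)
      (fun y hy => hf_pos y (Finset.mem_of_mem_filter y hy)) hmaps_right
    exact mul_pos_of_neg_of_neg (Finset.mem_filter.mp hy).2 (Finset.mem_filter.mp hz).2
  exact not_mapsTo_of_forall_orient_pos hO
    (fun x hx y hy => mul_pos (hleft x hx) (hleft y hy)) hf_pos hmaps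

end AngularSucc

/-! ### Noncrossing edges -/

section NoCrossing

variable {p a b c d : Pt} {Q : Finset Pt}

lemma NoCrossPair.symm {e f : Sym2 Pt} (h : NoCrossPair e f) : NoCrossPair f e :=
  fun _ hx => (h hx.symm).symm

lemma NoCross.mono {E F : Finset (Sym2 Pt)} (hF : NoCross F) (hEF : E ⊆ F) : NoCross E :=
  fun e he f hf => hF e (hEF he) f (hEF hf)

lemma noCrossPair_mk_iff : NoCrossPair s(a, b) s(c, d) ↔
    ∀ x ∈ segment ℝ a b, x ∈ segment ℝ c d → (x = a ∨ x = b) ∧ (x = c ∨ x = d) := by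
  simp [NoCrossPair, segOf, epts, Set.subset_def]

lemma noCrossPair_of_orient_ne_zero (h : orient p a b ≠ 0) : NoCrossPair s(p, a) s(p, b) := by
  refine noCrossPair_mk_iff.mpr fun x hxa hxb => ?_
  have hx : x ∈ segment ℝ p a ∩ segment ℝ p b := ⟨hxa, hxb⟩
  rw [segment_inter_eq_endpoint_of_linearIndependent_sub ℝ
    (linearIndependent_sub_of_orient_ne_zero h)] at hx
  exact ⟨Or.inl hx, Or.inl hx⟩

lemma IsAngularSucc.noCrossPair_spoke (hQ : RadiallyGeneric p Q)
    (hab : IsAngularSucc p Q a b) (hc : c ∈ Q) : NoCrossPair s(a, b) s(p, c) := by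
  have eq_of_mem : ∀ q ∈ Q, q ∈ segment ℝ p c → q = c := fun q hq hqc =>
    by_contra fun hne => hQ hq hc hne (orient_eq_zero_of_mem_segment hqc)
  refine noCrossPair_mk_iff.mpr fun x hxab hxpc => ?_
  rcases hab.eq_or_mem_openCone hxab with (rfl | rfl) | hcone
  · exact ⟨Or.inl rfl, Or.inr (eq_of_mem x hab.left_mem hxpc)⟩
  · exact ⟨Or.inr rfl, Or.inr (eq_of_mem x hab.right_mem hxpc)⟩
  · exact absurd (mem_openCone_of_mem_segment hcone hxpc) (hab.notMem_openCone c hc)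

lemma IsAngularSucc.noCrossPair (hQ : RadiallyGeneric p Q)
    (hab : IsAngularSucc p Q a b) (hcd : IsAngularSucc p Q c d) (hac : a ≠ c) :
    NoCrossPair s(a, b) s(c, d) := by
  refine noCrossPair_mk_iff.mpr fun x hxab hxcd => ?_
  rcases hab.eq_or_mem_openCone hxab with hx | hx <;>
    rcases hcd.eq_or_mem_openCone hxcd with hx' | hx'
  · exact ⟨hx, hx'⟩
  · have hxQ : x ∈ Q := by rcases hx with rfl | rfl; exacts [hab.left_mem, hab.right_mem]
    exact absurd hx' (hcd.notMem_openCone x hxQ)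
  · have hxQ : x ∈ Q := by rcases hx' with rfl | rfl; exacts [hcd.left_mem, hcd.right_mem]
    exact absurd hx (hab.notMem_openCone x hxQ)
  · exact absurd hx' (Set.disjoint_left.mp (hab.disjoint_openCone hQ hcd hac) hx)

end NoCrossing

/-! ### The wheel and its two trees -/

/-- The edges joining the hub `p` of a wheel to the points of `Q`. -/
def spokes (p : Pt) (Q : Finset Pt) : Finset (Sym2 Pt) := Q.image fun a => s(p, a)

/-- The edges joining each point of `Q` to its successor under `f`. -/
def rim (f : Pt → Pt) (Q : Finset Pt) : Finset (Sym2 Pt) := Q.image fun a => s(a, f a)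

/-- The star at `p` with its leaf `l` reattached to the successor of `l`. -/
def spokeTree (p l : Pt) (f : Pt → Pt) (Q : Finset Pt) : Finset (Sym2 Pt) :=
  insert s(l, f l) (spokes p (Q.erase l))

/-- The rim, cut open after `l`, with the hub `p` attached to `l`. -/
def rimTree (p l : Pt) (f : Pt → Pt) (Q : Finset Pt) : Finset (Sym2 Pt) :=
  insert s(p, l) (rim f (Q.erase l))

lemma reflTransGen_of_forall_reflTransGen_hub {α : Type*} {E : Finset (Sym2 α)} {S : Finset α}
    {p : α} (h : ∀ q ∈ S, Relation.ReflTransGen (fun a b => s(a, b) ∈ E) q p) :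
    ∀ x ∈ S, ∀ y ∈ S, Relation.ReflTransGen (fun a b => s(a, b) ∈ E) x y := by
  have : Std.Symm fun a b : α => s(a, b) ∈ E := ⟨fun a b hab => by rwa [Sym2.eq_swap]⟩
  exact fun x hx y hy => (h x hx).trans (Std.Symm.symm _ _ (h y hy))

section Wheel

variable {p l : Pt} {f : Pt → Pt} {Q : Finset Pt}

lemma card_spokes : (spokes p Q).card = Q.card :=
  Finset.card_image_of_injective Q fun _ _ h => Sym2.congr_right.mp h

lemma injOn_rim (hf : ∀ a ∈ Q, IsAngularSucc p Q a (f a)) :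
    Set.InjOn (fun a => s(a, f a)) Q := by
  intro a ha b hb hab
  rcases Sym2.eq_iff.mp hab with ⟨h, -⟩ | ⟨hafb, hfab⟩
  · exact h
  · have hpos_a := (hf a ha).orient_pos
    have hpos_b := (hf b hb).orient_pos
    rw [← hafb, ← hfab, orient_swap] at hpos_b
    linarith

lemma disjoint_spokes_rim (hp : p ∉ Q) (hf : Set.MapsTo f Q Q) :
    Disjoint (spokes p Q) (rim f Q) := by
  simp only [spokes, rim, Finset.disjoint_left, Finset.mem_image]
  rintro _ ⟨a, -, rfl⟩ ⟨b, hb, hab⟩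
  have hpb : p ∈ s(b, f b) := hab ▸ Sym2.mem_mk_left p a
  rcases Sym2.mem_iff.mp hpb with rfl | hpfb
  · exact hp hb
  · exact hp (hpfb ▸ hf hb)

lemma noCross_spokes_union_rim (hQ : RadiallyGeneric p Q)
    (hf : ∀ a ∈ Q, IsAngularSucc p Q a (f a)) : NoCross (spokes p Q ∪ rim f Q) := by
  simp only [NoCross, spokes, rim, Finset.mem_union, Finset.mem_image]
  rintro _ (⟨a, ha, rfl⟩ | ⟨a, ha, rfl⟩) _ (⟨b, hb, rfl⟩ | ⟨b, hb, rfl⟩) hne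
  · exact noCrossPair_of_orient_ne_zero (hQ ha hb (by rintro rfl; exact hne rfl))
  · exact ((hf b hb).noCrossPair_spoke hQ ha).symm
  · exact (hf a ha).noCrossPair_spoke hQ hb
  · exact (hf a ha).noCrossPair hQ (hf b hb) (by rintro rfl; exact hne rfl)

lemma not_isDiag_and_mem_of_mem_wheel (hp : p ∉ Q) (hf : ∀ a ∈ Q, IsAngularSucc p Q a (f a)) :
    ∀ e ∈ spokes p Q ∪ rim f Q, ¬ e.IsDiag ∧ ∀ q ∈ e, q ∈ insert p Q := by
  simp only [spokes, rim, Finset.mem_union, Finset.mem_image]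
  rintro _ (⟨a, ha, rfl⟩ | ⟨a, ha, rfl⟩)
  · have hpa : p ≠ a := by rintro rfl; exact hp ha
    simp [hpa, ha]
  · simp [(hf a ha).ne, ha, (hf a ha).right_mem]

lemma isPST_of_subset_wheel {E : Finset (Sym2 Pt)} (hp : p ∉ Q) (hQ : RadiallyGeneric p Q)
    (hf : ∀ a ∈ Q, IsAngularSucc p Q a (f a)) (hE : E ⊆ spokes p Q ∪ rim f Q)
    (hcard : E.card = Q.card)
    (hconn : ∀ q ∈ Q, Relation.ReflTransGen (fun a b => s(a, b) ∈ E) q p) :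
    IsPST (insert p Q) E := by
  refine ⟨fun e he => not_isDiag_and_mem_of_mem_wheel hp hf e (hE he),
    (noCross_spokes_union_rim hQ hf).mono hE, by rw [hcard, Finset.card_insert_of_notMem hp],
    reflTransGen_of_forall_reflTransGen_hub (p := p) ?_⟩
  exact Finset.forall_mem_insert .. |>.mpr ⟨.refl, hconn⟩

lemma spokeTree_subset (hl : l ∈ Q) : spokeTree p l f Q ⊆ spokes p Q ∪ rim f Q :=
  Finset.insert_subset (Finset.mem_union_right _ (Finset.mem_image_of_mem _ hl))
    ((Finset.image_subset_image (Finset.erase_subset l Q)).trans Finset.subset_union_left)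

lemma rimTree_subset (hl : l ∈ Q) : rimTree p l f Q ⊆ spokes p Q ∪ rim f Q :=
  Finset.insert_subset (Finset.mem_union_left _ (Finset.mem_image_of_mem _ hl))
    ((Finset.image_subset_image (Finset.erase_subset l Q)).trans Finset.subset_union_right)

lemma disjoint_spokeTree_rimTree (hp : p ∉ Q) (hl : l ∈ Q)
    (hf : ∀ a ∈ Q, IsAngularSucc p Q a (f a)) :
    Disjoint (spokeTree p l f Q) (rimTree p l f Q) := by
  have hdisj := disjoint_spokes_rim hp fun a ha => (hf a ha).right_mem
  have hl_rim : s(l, f l) ∈ rim f Q := Finset.mem_image_of_mem _ hl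
  have hl_spokes : s(p, l) ∈ spokes p Q := Finset.mem_image_of_mem _ hl
  rw [spokeTree, rimTree, Finset.disjoint_insert_left, Finset.disjoint_insert_right,
    Finset.mem_insert, not_or]
  refine ⟨⟨fun h => Finset.disjoint_left.mp hdisj (h ▸ hl_spokes) hl_rim, fun h => ?_⟩,
    fun h => ?_, hdisj.mono (Finset.image_subset_image (Finset.erase_subset l Q))
      (Finset.image_subset_image (Finset.erase_subset l Q))⟩
  · obtain ⟨a, ha, hal⟩ := Finset.mem_image.mp h
    exact Finset.ne_of_mem_erase ha (injOn_rim hf (Finset.mem_of_mem_erase ha) hl hal)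
  · obtain ⟨a, ha, hal⟩ := Finset.mem_image.mp h
    exact Finset.ne_of_mem_erase ha (Sym2.congr_right.mp hal)

lemma isPST_spokeTree (hp : p ∉ Q) (hQ : RadiallyGeneric p Q)
    (hl : l ∈ Q) (hf : ∀ a ∈ Q, IsAngularSucc p Q a (f a)) :
    IsPST (insert p Q) (spokeTree p l f Q) := by
  have hspoke : ∀ q ∈ Q, q ≠ l → s(q, p) ∈ spokeTree p l f Q := fun q hq hql =>
    Finset.mem_insert_of_mem
      (Finset.mem_image.mpr ⟨q, Finset.mem_erase.mpr ⟨hql, hq⟩, Sym2.eq_swap⟩)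
  refine isPST_of_subset_wheel hp hQ hf (spokeTree_subset hl) ?_ fun q hq => ?_
  · have hl_notMem : s(l, f l) ∉ spokes p (Q.erase l) := fun h =>
      Finset.disjoint_left.mp (disjoint_spokes_rim hp fun a ha => (hf a ha).right_mem)
        (Finset.image_subset_image (Finset.erase_subset l Q) h) (Finset.mem_image_of_mem _ hl)
    rw [spokeTree, Finset.card_insert_of_notMem hl_notMem, card_spokes,
      Finset.card_erase_add_one hl]
  · rcases eq_or_ne q l with rfl | hql
    · exact .head (Finset.mem_insert_self _ _)
        (.single (hspoke (f q) (hf q hq).right_mem (hf q hq).ne.symm))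
    · exact .single (hspoke q hq hql)

lemma reflTransGen_rim_erase (hQ : RadiallyGeneric p Q)
    (hf : ∀ a ∈ Q, IsAngularSucc p Q a (f a)) (hl : l ∈ Q) {q : Pt} (hq : q ∈ Q) :
    Relation.ReflTransGen (fun a b => s(a, b) ∈ rim f (Q.erase l)) q l := by
  by_contra hunreach
  let O := Q.filter fun x => Relation.ReflTransGen (fun a b => s(a, b) ∈ rim f (Q.erase l)) q x
  have hmaps : Set.MapsTo f O O := by
    intro x hx
    obtain ⟨hxQ, hqx⟩ := Finset.mem_filter.mp hx
    have hxl : x ≠ l := by rintro rfl; exact hunreach hqx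
    exact Finset.mem_filter.mpr ⟨(hf x hxQ).right_mem,
      hqx.tail (Finset.mem_image_of_mem _ (Finset.mem_erase.mpr ⟨hxl, hxQ⟩))⟩
  have hlO : l ∈ O := mem_of_mapsTo_angularSucc hQ hf (Finset.filter_subset _ Q)
    ⟨q, Finset.mem_filter.mpr ⟨hq, .refl⟩⟩ hmaps hl
  exact hunreach (Finset.mem_filter.mp hlO).2

lemma isPST_rimTree (hp : p ∉ Q) (hQ : RadiallyGeneric p Q)
    (hl : l ∈ Q) (hf : ∀ a ∈ Q, IsAngularSucc p Q a (f a)) :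
    IsPST (insert p Q) (rimTree p l f Q) := by
  refine isPST_of_subset_wheel hp hQ hf (rimTree_subset hl) ?_ fun q hq => ?_
  · have hl_notMem : s(p, l) ∉ rim f (Q.erase l) := fun h =>
      Finset.disjoint_left.mp (disjoint_spokes_rim hp fun a ha => (hf a ha).right_mem)
        (Finset.mem_image_of_mem _ hl) (Finset.image_subset_image (Finset.erase_subset l Q) h)
    have hinj : Set.InjOn (fun a => s(a, f a)) (Q.erase l) :=
      (injOn_rim hf).mono (Finset.erase_subset l Q)
    rw [rimTree, Finset.card_insert_of_notMem hl_notMem, rim, Finset.card_image_of_injOn hinj,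
      Finset.card_erase_add_one hl]
  · have hql : Relation.ReflTransGen (fun a b => s(a, b) ∈ rimTree p l f Q) q l :=
      Relation.ReflTransGen.mono (fun _ _ h => Finset.mem_insert_of_mem h) q l
        (reflTransGen_rim_erase hQ hf hl hq)
    have hlp : s(l, p) ∈ rimTree p l f Q := Sym2.eq_swap ▸ Finset.mem_insert_self s(p, l) _
    exact hql.tail hlp

end Wheel

theorem stmt_13_general {S : Finset Pt} {p : Pt} (hpS : p ∈ S)
    (hull : p ∈ convexHull ℝ ((S : Set Pt) \ {p}))
    (hcol : ((S : Set Pt) \ {p}).Pairwise fun q r => ¬ Collinear ℝ ({p, q, r} : Set Pt)) :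
    ∃ E_A E_B : Finset (Sym2 Pt), IsPST S E_A ∧ IsPST S E_B ∧
      E_A ∩ E_B = ∅ ∧ NoCross (E_A ∪ E_B) := by
  obtain ⟨Q, hp, rfl⟩ : ∃ Q, p ∉ Q ∧ insert p Q = S :=
    ⟨S.erase p, Finset.notMem_erase p S, Finset.insert_erase hpS⟩
  rw [Finset.coe_insert, Set.insert_sdiff_self_of_notMem (by simpa using hp)] at hull hcol
  have hQ : RadiallyGeneric p Q :=
    hcol.mono' fun _ _ h hzero => h (collinear_of_orient_eq_zero hzero)
  obtain ⟨l, hl⟩ : (Q : Set Pt).Nonempty := convexHull_nonempty_iff.mp ⟨p, hull⟩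
  choose! f hf using fun a (ha : a ∈ Q) =>
    exists_isAngularSucc hp hull ha fun b hb hba => hQ ha hb hba.symm
  exact ⟨spokeTree p l f Q, rimTree p l f Q, isPST_spokeTree hp hQ hl hf,
    isPST_rimTree hp hQ hl hf,
    Finset.disjoint_iff_inter_eq_empty.mp (disjoint_spokeTree_rimTree hp hl hf),
    (noCross_spokes_union_rim hQ hf).mono
      (Finset.union_subset (spokeTree_subset hl) (rimTree_subset hl))⟩

/-- a point set in general position but not in convex position carries two
edge-disjoint compatible noncrossing spanning trees. -/
theorem stmt_13 :
    ∀ S : Finset Pt, 2 ≤ S.card → GenPos S → ¬ ConvexPos S →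
      ∃ E_A E_B : Finset (Sym2 Pt), IsPST S E_A ∧ IsPST S E_B ∧
        E_A ∩ E_B = ∅ ∧ NoCross (E_A ∪ E_B) := by
  intro S _ hgen hconv
  obtain ⟨p, hpS, hull⟩ : ∃ p ∈ S, p ∈ convexHull ℝ ((S : Set Pt) \ {p}) := by
    simpa [ConvexPos] using hconv
  exact stmt_13_general hpS hull fun q hq r hr hqr =>
    hgen p hpS q hq.1 r hr.1 (Ne.symm hq.2) (Ne.symm hr.2) hqr
end
end
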